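/- Fix an integer d ≥ 3 and a real p with 1/(d-1) < p < 1, and let q ∈ [0,1) satisfy q = (1-p+pq)^{d-1}. Set θ₂ = 1 − q − (d−1) p q (1−q) and η₂ = (1/2) p d (1 − q)². Then for every ε > 0 and b > 0 there exist c, C, R > 0 such that: if 𝒢 is a regular (b,d)-expander on n vertices with girth at least R, then with probability at least 1 − C·exp(−c n), the random graph G ∼ 𝒢_p satisfies | |V(C₁^{(2)}(G))|/n − θ₂ | < ε and | |E(C₁^{(2)}(G))|/n − η₂ | < ε, where C₁^{(2)}(G) is the 2-core of a largest connected component of G. -/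

import Mathlib

open scoped Classical symmDiff

noncomputable section

namespace Percolation

variable {V : Type} [Fintype V] [DecidableEq V]

/-- The edge set of `G` as a finset. -/
noncomputable def edgeFinset' (G : SimpleGraph V) : Finset (Sym2 V) :=
  Finset.univ.filter (· ∈ G.edgeSet)

/-- Probability that bond percolation on `G` with parameter `p` produces a spanning
subgraph satisfying `P`. -/
noncomputable def percProb (G : SimpleGraph V) (p : ℝ) (P : SimpleGraph V → Prop) : ℝ :=
  ∑ s ∈ (edgeFinset' G).powerset,
    (p ^ s.card * (1 - p) ^ ((edgeFinset' G).card - s.card)) *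
      (if P (SimpleGraph.fromEdgeSet (↑s)) then 1 else 0)

/-- Joint probability for two independent bond percolations on `G`. -/
noncomputable def percProb2 (G : SimpleGraph V) (p₁ p₂ : ℝ)
    (P : SimpleGraph V → SimpleGraph V → Prop) : ℝ :=
  ∑ s ∈ (edgeFinset' G).powerset, ∑ t ∈ (edgeFinset' G).powerset,
    (p₁ ^ s.card * (1 - p₁) ^ ((edgeFinset' G).card - s.card)) *
    (p₂ ^ t.card * (1 - p₂) ^ ((edgeFinset' G).card - t.card)) *
      (if P (SimpleGraph.fromEdgeSet (↑s)) (SimpleGraph.fromEdgeSet (↑t)) then 1 else 0)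

/-- Number of edges of `G` joining `S` to its complement. -/
noncomputable def cutCard (G : SimpleGraph V) (S : Finset V) : ℕ :=
  ((edgeFinset' G).filter (fun e => ∃ x ∈ S, ∃ y, y ∉ S ∧ e = s(x, y))).card

/-- `G` is a `(b,d)`-expander: max degree at most `d`, and every vertex set of size at most
`n/2` has at least `b|S|` edges to its complement. -/
def IsExpander (G : SimpleGraph V) (b : ℝ) (d : ℕ) : Prop :=
  (∀ v, (G.neighborSet v).ncard ≤ d) ∧
  ∀ S : Finset V, (S.card : ℝ) ≤ Fintype.card V / 2 → b * S.card ≤ cutCard G S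

/-- `G` is a regular `(b,d)`-expander. -/
def IsRegularExpander (G : SimpleGraph V) (b : ℝ) (d : ℕ) : Prop :=
  IsExpander G b d ∧ ∀ v, (G.neighborSet v).ncard = d

/-- The vertices of the connected component `c` of `G`. -/
noncomputable def compVerts (G : SimpleGraph V) (c : G.ConnectedComponent) : Finset V :=
  Finset.univ.filter (fun v => G.connectedComponentMk v = c)

/-- The edges of the connected component `c` of `G`. -/
noncomputable def compEdges (G : SimpleGraph V) (c : G.ConnectedComponent) : Finset (Sym2 V) :=
  (edgeFinset' G).filter (fun e => ∀ v ∈ e, G.connectedComponentMk v = c)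

/-- `c` is a largest connected component of `G`. -/
def IsLargestComp (G : SimpleGraph V) (c : G.ConnectedComponent) : Prop :=
  ∀ c' : G.ConnectedComponent, (compVerts G c').card ≤ (compVerts G c).card

/-- The 2-core of the connected component `c` of `G` : the maximal subgraph of `G`
supported inside `c` all of whose vertices have degree at least 2. -/
noncomputable def twoCoreComp (G : SimpleGraph V) (c : G.ConnectedComponent) : SimpleGraph V :=
  sSup {H : SimpleGraph V | H ≤ G ∧ (∀ v ∈ H.support, G.connectedComponentMk v = c) ∧
    ∀ v ∈ H.support, 2 ≤ (H.neighborSet v).ncard}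

/-- The event `A^R_{x,y}(H)`: the connected component of `y` in `H` with the edge `xy`
removed (if present) has at least `R` vertices. -/
def eventA (H : SimpleGraph V) (R : ℕ) (x y : V) : Prop :=
  R ≤ (compVerts (H.deleteEdges {s(x, y)})
        ((H.deleteEdges {s(x, y)}).connectedComponentMk y)).card

/-- `E₁(H)`: edges `xy` of `H` such that `A^R_{x,y}` or `A^R_{y,x}` holds. -/
noncomputable def E1set (H : SimpleGraph V) (R : ℕ) : Finset (Sym2 V) :=
  (edgeFinset' H).filter (fun e => ∃ x y, e = s(x, y) ∧ (eventA H R x y ∨ eventA H R y x))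

/-- `V₁(H)`: vertices `x` such that for some `y`, `xy ∈ E(H)` and `A^R_{x,y}` holds. -/
noncomputable def V1set (H : SimpleGraph V) (R : ℕ) : Finset V :=
  Finset.univ.filter (fun x => ∃ y, H.Adj x y ∧ eventA H R x y)

/-- `E₂(H)`: edges `xy` of `H` such that both `A^R_{x,y}` and `A^R_{y,x}` hold. -/
noncomputable def E2set (H : SimpleGraph V) (R : ℕ) : Finset (Sym2 V) :=
  (edgeFinset' H).filter (fun e => ∃ x y, e = s(x, y) ∧ eventA H R x y ∧ eventA H R y x)

/-- `V₂(H)`: vertices incident to an edge of `E₂(H)`. -/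
noncomputable def V2set (H : SimpleGraph V) (R : ℕ) : Finset V :=
  Finset.univ.filter (fun x => ∃ e ∈ E2set H R, x ∈ e)

/-- `V̄₁(H)`: vertices `y` such that `A^R_{x,y}(H)` holds for some `x`. -/
noncomputable def Vbar1 (H : SimpleGraph V) (R : ℕ) : Finset V :=
  Finset.univ.filter (fun y => ∃ x, eventA H R x y)

/-- `S` is `k`-thick in `H`: a union of pairwise disjoint subsets, each of size at least
`k`, each inducing a connected subgraph of `H`. -/
def IsThick (H : SimpleGraph V) (k : ℕ) (S : Finset V) : Prop :=
  ∃ P : Finset (Finset V),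
    (∀ T ∈ P, k ≤ T.card ∧ (H.induce (↑T : Set V)).Connected) ∧
    (↑P : Set (Finset V)).PairwiseDisjoint id ∧ S = P.biUnion id

/-- `S` is a separator of `K`. -/
def IsSeparator {W : Type} [Fintype W] (K : SimpleGraph W) (S : Finset W) : Prop :=
  ∃ A B : Finset W, Disjoint A B ∧ Disjoint A S ∧ Disjoint B S ∧
    (∀ w, w ∈ A ∨ w ∈ B ∨ w ∈ S) ∧
    (∀ a ∈ A, ∀ b ∈ B, ¬ K.Adj a b) ∧
    3 * A.card ≤ 2 * Fintype.card W ∧ 3 * B.card ≤ 2 * Fintype.card W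

/-!
Write `1 - p = (1 - p₁) (1 - p₂)` with `p₁ < p` close to `p`, so that `G_p` is the union of `G_{p₁}`
and an independent sprinkling `G_{p₂}`. Call a dart `(x, y)` extendable to depth `k` if its edge is
retained and starts a non-backtracking walk of `k + 1` retained edges. When the girth exceeds
`2k + 2` these walks explore a tree, so the darts out of a vertex are extendable independently, with
a probability that follows the Galton–Watson recursion and tends to `p (1 - q)` as `k → ∞`. A vertex
should lie in the 2-core when at least two of its darts are extendable, and its degree there should
be the number of such darts; `θ₂` and `2 η₂` are the resulting binomial expectations, around which
the counts concentrate because one edge affects a bounded number of darts.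

Every dart of the 2-core is extendable, which gives the upper bounds. For the lower bounds,
expansion makes it unlikely that the sprinkling leaves a sparse cut which splits the large
components of `G_{p₁}`. An extendable dart missing from the 2-core is a bridge of `G_p` with two
large sides, one of which avoids most of the giant component; these sides form a laminar family, the
maximal ones are separated by few edges, and so together they contain few vertices of large
components.
-/

/-! ### Random subsets -/

section RandomSubset

/-- Expectation of `f s`, where `s ⊆ E` contains each element independently with
probability `p`. -/
def expect {α : Type*} (E : Finset α) (p : ℝ) (f : Finset α → ℝ) : ℝ :=
  ∑ s ∈ E.powerset, (p ^ s.card * (1 - p) ^ (E.card - s.card)) * f s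

/-- Probability of `P s`, where `s ⊆ E` contains each element independently with
probability `p`. -/
def prob {α : Type*} (E : Finset α) (p : ℝ) (P : Finset α → Prop) : ℝ :=
  expect E p fun s => if P s then 1 else 0

/-- The value of `f` depends only on the intersection of its argument with `A`. Functions
determined by disjoint sets are independent under `expect`. -/
def DeterminedBy {α β : Type*} (f : Finset α → β) (A : Set α) : Prop :=
  ∀ s t : Finset α, (∀ e ∈ A, e ∈ s ↔ e ∈ t) → f s = f t

variable {α : Type*} {E : Finset α} {p : ℝ}

@[simp] lemma expect_empty (p : ℝ) (f : Finset α → ℝ) : expect ∅ p f = f ∅ := by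
  simp [expect]

@[simp] lemma expect_const (E : Finset α) (p c : ℝ) : expect E p (fun _ => c) = c := by
  simp [expect, ← Finset.sum_mul, Finset.sum_pow_mul_eq_add_pow]

lemma expect_add (f g : Finset α → ℝ) :
    expect E p (fun s => f s + g s) = expect E p f + expect E p g := by
  simp [expect, mul_add, Finset.sum_add_distrib]

lemma expect_const_mul (c : ℝ) (f : Finset α → ℝ) :
    expect E p (fun s => c * f s) = c * expect E p f := by
  simp only [expect, Finset.mul_sum]
  exact Finset.sum_congr rfl fun s _ => by ring

lemma expect_neg (f : Finset α → ℝ) : expect E p (fun s => -f s) = -expect E p f := by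
  simp [expect]

lemma expect_sub (f g : Finset α → ℝ) :
    expect E p (fun s => f s - g s) = expect E p f - expect E p g := by
  simp [expect, mul_sub]

lemma expect_sum {ι : Type*} (I : Finset ι) (f : ι → Finset α → ℝ) :
    expect E p (fun s => ∑ i ∈ I, f i s) = ∑ i ∈ I, expect E p (f i) := by
  simp only [expect, Finset.mul_sum]
  exact Finset.sum_comm

lemma expect_congr {f g : Finset α → ℝ} (h : ∀ s ⊆ E, f s = g s) :
    expect E p f = expect E p g :=
  Finset.sum_congr rfl fun s hs => by rw [h s (Finset.mem_powerset.1 hs)]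

lemma expect_mono (hp0 : 0 ≤ p) (hp1 : p ≤ 1) {f g : Finset α → ℝ}
    (h : ∀ s ⊆ E, f s ≤ g s) : expect E p f ≤ expect E p g := by
  refine Finset.sum_le_sum fun s hs => ?_
  have := h s (Finset.mem_powerset.1 hs)
  have : 0 ≤ 1 - p := by linarith
  gcongr

lemma expect_insert [DecidableEq α] {e : α} (he : e ∉ E) (p : ℝ) (f : Finset α → ℝ) :
    expect (insert e E) p f =
      p * expect E p (fun s => f (insert e s)) + (1 - p) * expect E p f := by
  unfold expect
  rw [Finset.sum_powerset_insert he, Finset.mul_sum, Finset.mul_sum, add_comm]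
  congr 1 <;> refine Finset.sum_congr rfl fun s hs => ?_
  · have hes : e ∉ s := fun h => he (Finset.mem_powerset.1 hs h)
    rw [Finset.card_insert_of_notMem hes, Finset.card_insert_of_notMem he]
    simp only [Nat.add_sub_add_right]
    ring
  · rw [Finset.card_insert_of_notMem he,
      Nat.succ_sub (Finset.card_le_card (Finset.mem_powerset.1 hs)), pow_succ]
    ring

lemma prob_insert [DecidableEq α] {e : α} (he : e ∉ E) (p : ℝ) (P : Finset α → Prop) :
    prob (insert e E) p P = p * prob E p (fun s => P (insert e s)) + (1 - p) * prob E p P :=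
  expect_insert he p _

/-- The union of independent random subsets with densities `p₁` and `p₂` is a random subset of
density `p` where `1 - p = (1 - p₁) * (1 - p₂)`. -/
lemma expect_union [DecidableEq α] {p₁ p₂ : ℝ} (h : 1 - p = (1 - p₁) * (1 - p₂))
    (f : Finset α → ℝ) :
    expect E p f = expect E p₁ (fun s => expect E p₂ (fun t => f (s ∪ t))) := by
  induction E using Finset.induction_on generalizing f with
  | empty => simp
  | insert e E he ih =>
    simp only [expect_insert he, expect_add, expect_const_mul]
    rw [ih, ih]
    simp only [Finset.insert_union, Finset.union_insert, Finset.insert_idem]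
    linear_combination
      ((expect E p₁ fun s => expect E p₂ fun t => f (s ∪ t)) -
        (expect E p₁ fun s => expect E p₂ fun t => f (insert e (s ∪ t)))) * h

lemma prob_congr {P Q : Finset α → Prop} (h : ∀ s ⊆ E, P s ↔ Q s) : prob E p P = prob E p Q :=
  expect_congr fun s hs => by simp only [h s hs]

lemma prob_mono (hp0 : 0 ≤ p) (hp1 : p ≤ 1) {P Q : Finset α → Prop} (h : ∀ s ⊆ E, P s → Q s) :
    prob E p P ≤ prob E p Q :=
  expect_mono hp0 hp1 fun s hs => by
    by_cases hP : P s
    · simp [hP, h s hs hP]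
    · by_cases Q s <;> simp [*]

lemma prob_eq_one {P : Finset α → Prop} (h : ∀ s ⊆ E, P s) : prob E p P = 1 :=
  (expect_congr fun s hs => if_pos (h s hs)).trans (expect_const E p 1)

lemma prob_eq_zero {P : Finset α → Prop} (h : ∀ s ⊆ E, ¬P s) : prob E p P = 0 :=
  (expect_congr fun s hs => if_neg (h s hs)).trans (expect_const E p 0)

lemma prob_nonneg (hp0 : 0 ≤ p) (hp1 : p ≤ 1) (P : Finset α → Prop) : 0 ≤ prob E p P :=
  (prob_eq_zero fun _ _ => not_false).symm.trans_le (prob_mono hp0 hp1 fun _ _ => False.elim)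

lemma prob_le_one (hp0 : 0 ≤ p) (hp1 : p ≤ 1) (P : Finset α → Prop) : prob E p P ≤ 1 :=
  (prob_mono hp0 hp1 fun _ _ _ => trivial).trans_eq (prob_eq_one fun _ _ => trivial)

lemma prob_not (P : Finset α → Prop) : prob E p (fun s => ¬P s) = 1 - prob E p P := by
  rw [prob, prob, ← expect_const E p 1, ← expect_sub]
  exact expect_congr fun s _ => by split_ifs <;> simp_all

lemma prob_exists_le_sum {ι : Type*} (hp0 : 0 ≤ p) (hp1 : p ≤ 1) (I : Finset ι)
    (P : ι → Finset α → Prop) :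
    prob E p (fun s => ∃ i ∈ I, P i s) ≤ ∑ i ∈ I, prob E p (P i) := by
  unfold prob
  rw [← expect_sum]
  refine expect_mono hp0 hp1 fun s _ => ?_
  have hnonneg : ∀ i ∈ I, (0 : ℝ) ≤ if P i s then 1 else 0 := fun i _ => by split_ifs <;> simp
  split_ifs with h
  · obtain ⟨i, hi, hPi⟩ := h
    simpa [hPi] using Finset.single_le_sum hnonneg hi
  · exact Finset.sum_nonneg hnonneg

lemma prob_or_le (hp0 : 0 ≤ p) (hp1 : p ≤ 1) (P Q : Finset α → Prop) :
    prob E p (fun s => P s ∨ Q s) ≤ prob E p P + prob E p Q := by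
  unfold prob
  rw [← expect_add]
  exact expect_mono hp0 hp1 fun s _ => by by_cases P s <;> by_cases Q s <;> simp [*]

lemma one_sub_le_prob_of_union [DecidableEq α] {p₁ p₂ a₁ a₂ a₃ : ℝ}
    (h : 1 - p = (1 - p₁) * (1 - p₂)) (hp₁ : 0 ≤ p₁) (hp₁' : p₁ ≤ 1) (hp₂ : 0 ≤ p₂) (hp₂' : p₂ ≤ 1)
    {P₁ P₂ Q : Finset α → Prop} {P₃ : Finset α → Finset α → Prop}
    (hPQ : ∀ s ⊆ E, ∀ t ⊆ E, P₁ s → P₂ (s ∪ t) → P₃ s t → Q (s ∪ t))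
    (h₁ : prob E p₁ (fun s => ¬P₁ s) ≤ a₁) (h₂ : prob E p (fun s => ¬P₂ s) ≤ a₂)
    (h₃ : ∀ s, prob E p₂ (fun t => ¬P₃ s t) ≤ a₃) :
    1 - (a₁ + a₂ + a₃) ≤ prob E p Q := by
  have hbad : prob E p (fun s => ¬Q s) ≤
      expect E p₁ fun s =>
        (if ¬P₁ s then 1 else 0) + (prob E p₂ (fun t => ¬P₂ (s ∪ t)) + a₃) := by
    rw [prob, expect_union h]
    refine expect_mono hp₁ hp₁' fun s hs => ?_
    by_cases hs₁ : P₁ s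
    · rw [if_neg (not_not.2 hs₁), zero_add]
      refine le_trans ?_ ((prob_or_le hp₂ hp₂' _ _).trans (by gcongr; exact h₃ s))
      refine prob_mono hp₂ hp₂' fun t ht hQ => ?_
      contrapose! hQ
      exact hPQ s hs t ht hs₁ hQ.1 hQ.2
    · rw [if_pos hs₁]
      have hle := prob_le_one (E := E) hp₂ hp₂' fun t => ¬Q (s ∪ t)
      have hge := prob_nonneg (E := E) hp₂ hp₂' fun t => ¬P₂ (s ∪ t)
      have ha₃ := (prob_nonneg (E := E) hp₂ hp₂' _).trans (h₃ s)
      exact hle.trans (by linarith)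
  rw [expect_add, expect_add, expect_const] at hbad
  have h₂' : expect E p₁ (fun s => prob E p₂ (fun t => ¬P₂ (s ∪ t))) ≤ a₂ :=
    (expect_union h _).symm.trans_le h₂
  rw [prob_not] at hbad
  have h₁' : expect E p₁ (fun s => if ¬P₁ s then 1 else 0) ≤ a₁ :=
    (expect_congr fun s _ => by congr).trans_le h₁
  linarith

end RandomSubset

section Independence

variable {α : Type*} {E : Finset α} {p : ℝ}

lemma determinedBy_subset (P : Finset α) : DeterminedBy (fun s => P ⊆ s) (P : Set α) :=
  fun _ _ hst => propext ⟨fun h x hx => (hst x hx).1 (h hx), fun h x hx => (hst x hx).2 (h hx)⟩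

lemma determinedBy_mem (e : α) : DeterminedBy (fun s : Finset α => e ∈ s) {e} :=
  fun _ _ hst => propext (hst e rfl)

namespace DeterminedBy

lemma comp {β γ : Type*} {f : Finset α → β} {A : Set α} (hf : DeterminedBy f A) (g : β → γ) :
    DeterminedBy (fun s => g (f s)) A :=
  fun s t hst => congrArg g (hf s t hst)

lemma ite {P : Finset α → Prop} {A : Set α} (hP : DeterminedBy P A) :
    DeterminedBy (fun s => if P s then (1 : ℝ) else 0) A :=
  hP.comp fun P => if P then (1 : ℝ) else 0

lemma insert_comp [DecidableEq α] {β : Type*} {f : Finset α → β} {A : Set α}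
    (hf : DeterminedBy f A) (e : α) : DeterminedBy (fun s => f (insert e s)) A := by
  refine fun s t hst => hf _ _ fun x hx => ?_
  simp [hst x hx]

lemma insert_eq [DecidableEq α] {β : Type*} {f : Finset α → β} {A : Set α}
    (hf : DeterminedBy f A) {e : α} (he : e ∉ A) (s : Finset α) : f (insert e s) = f s := by
  refine hf _ _ fun x hx => ?_
  have : x ≠ e := fun h => he (h ▸ hx)
  simp [this]

lemma filter {ι : Type*} {I : Finset ι} {A : ι → Set α} {P : ι → Finset α → Prop}
    (hP : ∀ i ∈ I, DeterminedBy (P i) (A i)) :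
    DeterminedBy (fun s => I.filter fun i => P i s) (⋃ i ∈ I, A i) :=
  fun s t hst => Finset.filter_congr fun i hi =>
    (hP i hi s t fun e he => hst e (Set.mem_biUnion hi he)).to_iff

end DeterminedBy

lemma expect_mul {A B : Set α} (hAB : Disjoint A B) {f g : Finset α → ℝ}
    (hf : DeterminedBy f A) (hg : DeterminedBy g B) :
    expect E p (fun s => f s * g s) = expect E p f * expect E p g := by
  induction E using Finset.induction_on generalizing f g with
  | empty => simp
  | insert e E he ih =>
    simp only [expect_insert he]
    rw [ih hf hg, ih (hf.insert_comp e) (hg.insert_comp e)]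
    by_cases heA : e ∈ A
    · have heB : e ∉ B := fun h => Set.disjoint_left.1 hAB heA h
      simp only [hg.insert_eq heB]
      ring
    · simp only [hf.insert_eq heA]
      ring

lemma prob_and {A B : Set α} (hAB : Disjoint A B) {P Q : Finset α → Prop}
    (hP : DeterminedBy P A) (hQ : DeterminedBy Q B) :
    prob E p (fun s => P s ∧ Q s) = prob E p P * prob E p Q := by
  rw [prob, prob, prob, ← expect_mul hAB hP.ite hQ.ite]
  exact expect_congr fun s _ => by by_cases P s <;> by_cases Q s <;> simp [*]

lemma prob_mem {e : α} (he : e ∈ E) : prob E p (fun s => e ∈ s) = p := by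
  obtain ⟨E, heE, rfl⟩ : ∃ F, e ∉ F ∧ insert e F = E :=
    ⟨E.erase e, Finset.notMem_erase e E, Finset.insert_erase he⟩
  rw [prob_insert heE, prob_eq_one fun s _ => Finset.mem_insert_self e s,
    prob_eq_zero fun s hs h => heE (hs h)]
  ring

lemma prob_subset {P : Finset α} (hP : P ⊆ E) : prob E p (fun s => P ⊆ s) = p ^ P.card := by
  induction P using Finset.induction_on with
  | empty => simp [prob]
  | insert e P he ih =>
    simp only [Finset.insert_subset_iff] at hP ⊢
    rw [prob_and (by simpa using he) (determinedBy_mem e) (determinedBy_subset P),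
      prob_mem hP.1, ih hP.2, Finset.card_insert_of_notMem he, pow_succ']

lemma prob_nonempty (p : ℝ) : prob E p Finset.Nonempty = 1 - (1 - p) ^ E.card := by
  have hempty : prob E p (fun s => s = ∅) = (1 - p) ^ E.card := by
    induction E using Finset.induction_on with
    | empty => simp [prob]
    | insert e E he ih =>
      rw [prob_insert he, prob_eq_zero fun s _ => Finset.insert_ne_empty e s, ih,
        Finset.card_insert_of_notMem he, pow_succ']
      ring
  rw [← hempty, ← prob_not]
  exact prob_congr fun s _ => Finset.nonempty_iff_ne_empty

lemma expect_filter_insert {ι : Type*} [DecidableEq ι] {I : Finset ι} {i : ι} (hi : i ∉ I)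
    {A : ι → Set α} {P : ι → Finset α → Prop}
    (hA : ((insert i I : Finset ι) : Set ι).PairwiseDisjoint A)
    (hP : ∀ j ∈ insert i I, DeterminedBy (P j) (A j)) (f : Finset ι → ℝ) :
    expect E p (fun s => f ((insert i I).filter fun j => P j s)) =
      prob E p (P i) * expect E p (fun s => f (insert i (I.filter fun j => P j s))) +
        (1 - prob E p (P i)) * expect E p (fun s => f (I.filter fun j => P j s)) := by
  have hdisj : Disjoint (A i) (⋃ j ∈ I, A j) := Set.disjoint_iUnion₂_right.2 fun j hj =>
    hA (by simp) (by simp [hj]) fun h => hi (h ▸ hj)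
  have hI := DeterminedBy.filter fun j hj => hP j (Finset.mem_insert_of_mem hj)
  have hPi := hP i (Finset.mem_insert_self i I)
  have hnot : DeterminedBy (fun s => ¬P i s) (A i) := hPi.comp Not
  rw [← prob_not, prob, prob, ← expect_mul hdisj hPi.ite (hI.comp fun J => f (insert i J)),
    ← expect_mul hdisj hnot.ite (hI.comp f), ← expect_add]
  refine expect_congr fun s _ => ?_
  by_cases h : P i s <;> simp [h, Finset.filter_insert]

/-- The set of those of finitely many independent events of probability `r` that occur is a random
subset of density `r`. -/
lemma expect_filter {ι : Type*} {r : ℝ} (I : Finset ι) {A : ι → Set α}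
    {P : ι → Finset α → Prop} (hA : (I : Set ι).PairwiseDisjoint A)
    (hP : ∀ i ∈ I, DeterminedBy (P i) (A i)) (hr : ∀ i ∈ I, prob E p (P i) = r)
    (f : Finset ι → ℝ) :
    expect E p (fun s => f (I.filter fun i => P i s)) = expect I r f := by
  induction I using Finset.induction_on generalizing f with
  | empty => simp
  | insert i I hi ih =>
    have ih' := ih (hA.subset (Finset.coe_subset.2 (Finset.subset_insert i I)))
      (fun j hj => hP j (Finset.mem_insert_of_mem hj))
      fun j hj => hr j (Finset.mem_insert_of_mem hj)
    rw [expect_filter_insert hi hA hP, hr i (Finset.mem_insert_self i I), expect_insert hi, ih' f,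
      ih' fun J => f (insert i J)]

lemma prob_filter {ι : Type*} (I : Finset ι) {A : ι → Set α} {P : ι → Finset α → Prop} {r : ℝ}
    (hA : (I : Set ι).PairwiseDisjoint A) (hP : ∀ i ∈ I, DeterminedBy (P i) (A i))
    (hr : ∀ i ∈ I, prob E p (P i) = r) (Q : Finset ι → Prop) :
    prob E p (fun s => Q (I.filter fun i => P i s)) = prob I r Q :=
  expect_filter I hA hP hr fun J => if Q J then 1 else 0

end Independence

section Concentration

variable {α : Type*} {E : Finset α} {p : ℝ}

lemma exp_le_add_exp_sq (x : ℝ) : Real.exp x ≤ x + Real.exp (x ^ 2) := by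
  have h2 := Real.add_one_le_exp (x ^ 2)
  rcases le_or_gt |x| 1 with h | h
  · have := (abs_le.1 (Real.abs_exp_sub_one_sub_id_le h)).2
    linarith
  · rcases lt_abs.1 h with h | h
    · have : Real.exp x ≤ Real.exp (x ^ 2) := Real.exp_le_exp.2 (by nlinarith)
      linarith
    · have : Real.exp x ≤ 1 := Real.exp_le_one_iff.2 (by linarith)
      nlinarith

lemma exp_two_point_le (hp0 : 0 ≤ p) (hp1 : p ≤ 1) {x y K : ℝ} (hxy : |x - y| ≤ K) (t : ℝ) :
    p * Real.exp (t * x) + (1 - p) * Real.exp (t * y) ≤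
      Real.exp (t ^ 2 * K ^ 2) * Real.exp (t * (p * x + (1 - p) * y)) := by
  set m := p * x + (1 - p) * y with hm
  have hdev : ∀ z, |z| ≤ K → Real.exp (t * z) ≤ t * z + Real.exp (t ^ 2 * K ^ 2) := by
    intro z hz
    refine (exp_le_add_exp_sq _).trans ?_
    have : z ^ 2 ≤ K ^ 2 := sq_le_sq' (abs_le.1 hz).1 (abs_le.1 hz).2
    rw [mul_pow]
    gcongr
  have hx := hdev (x - m) (by rw [abs_le] at hxy ⊢; constructor <;> nlinarith)
  have hy := hdev (y - m) (by rw [abs_le] at hxy ⊢; constructor <;> nlinarith)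
  have hcentred : p * Real.exp (t * (x - m)) + (1 - p) * Real.exp (t * (y - m)) ≤
      Real.exp (t ^ 2 * K ^ 2) := by
    have hmean : p * (t * (x - m)) + (1 - p) * (t * (y - m)) = 0 := by rw [hm]; ring
    linarith [hmean, mul_le_mul_of_nonneg_left hx hp0,
      mul_le_mul_of_nonneg_left hy (sub_nonneg.2 hp1)]
  calc p * Real.exp (t * x) + (1 - p) * Real.exp (t * y)
      = (p * Real.exp (t * (x - m)) + (1 - p) * Real.exp (t * (y - m))) * Real.exp (t * m) := by
        rw [add_mul, mul_assoc, mul_assoc, ← Real.exp_add, ← Real.exp_add]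
        ring_nf
    _ ≤ Real.exp (t ^ 2 * K ^ 2) * Real.exp (t * m) := by gcongr

/-- Exposing one element at a time, each step multiplies the exponential moment by at most
`exp (t² Kₑ²)`. -/
lemma expect_exp_le [DecidableEq α] (hp0 : 0 ≤ p) (hp1 : p ≤ 1) {f : Finset α → ℝ} {K : α → ℝ}
    (hf : ∀ e s, |f (insert e s) - f s| ≤ K e) (t : ℝ) :
    expect E p (fun s => Real.exp (t * f s)) ≤
      Real.exp (t * expect E p f + t ^ 2 * ∑ e ∈ E, K e ^ 2) := by
  induction E using Finset.induction_on generalizing f with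
  | empty => simp
  | insert e E he ih =>
    set g : Finset α → ℝ := fun s => p * f (insert e s) + (1 - p) * f s with hg
    have hgK : ∀ a s, |g (insert a s) - g s| ≤ K a := by
      intro a s
      have h1 := abs_le.1 (hf a (insert e s))
      have h2 := abs_le.1 (hf a s)
      rw [Finset.insert_comm] at h1
      simp only [hg, abs_le]
      constructor <;> nlinarith
    calc expect (insert e E) p (fun s => Real.exp (t * f s))
        = expect E p (fun s => p * Real.exp (t * f (insert e s)) +
            (1 - p) * Real.exp (t * f s)) := by
          rw [expect_insert he, expect_add, expect_const_mul, expect_const_mul]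
      _ ≤ expect E p (fun s => Real.exp (t ^ 2 * K e ^ 2) * Real.exp (t * g s)) :=
          expect_mono hp0 hp1 fun s _ => exp_two_point_le hp0 hp1 (hf e s) t
      _ ≤ Real.exp (t ^ 2 * K e ^ 2) *
            Real.exp (t * expect E p g + t ^ 2 * ∑ a ∈ E, K a ^ 2) := by
          rw [expect_const_mul]
          gcongr
          exact ih hgK
      _ = Real.exp (t * expect (insert e E) p f + t ^ 2 * ∑ a ∈ insert e E, K a ^ 2) := by
          rw [← Real.exp_add, expect_insert he, Finset.sum_insert he, hg, expect_add,
            expect_const_mul, expect_const_mul]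
          ring_nf

lemma prob_expect_add_le_le [DecidableEq α] (hp0 : 0 ≤ p) (hp1 : p ≤ 1) {f : Finset α → ℝ}
    {K : α → ℝ} (hf : ∀ e s, |f (insert e s) - f s| ≤ K e) {a σ : ℝ} (hσ : 0 < σ)
    (hK : ∑ e ∈ E, K e ^ 2 ≤ σ) (ha : 0 ≤ a) :
    prob E p (fun s => expect E p f + a ≤ f s) ≤ Real.exp (-(a ^ 2 / (4 * σ))) := by
  -- This `t` minimises the exponent `t² σ - t a`.
  set t := a / (2 * σ) with ht
  have ht0 : 0 ≤ t := by positivity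
  calc prob E p (fun s => expect E p f + a ≤ f s)
      ≤ expect E p (fun s => Real.exp (-(t * (expect E p f + a))) * Real.exp (t * f s)) := by
        refine expect_mono hp0 hp1 fun s _ => ?_
        rw [← Real.exp_add]
        split_ifs with h
        · exact Real.one_le_exp (by nlinarith)
        · positivity
    _ ≤ Real.exp (-(t * (expect E p f + a))) * Real.exp (t * expect E p f + t ^ 2 * σ) := by
        rw [expect_const_mul]
        gcongr
        refine (expect_exp_le hp0 hp1 hf t).trans ?_
        gcongr
    _ = Real.exp (-(a ^ 2 / (4 * σ))) := by
        rw [← Real.exp_add, ht]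
        congr 1
        field_simp
        ring

lemma prob_le_expect_sub_le [DecidableEq α] (hp0 : 0 ≤ p) (hp1 : p ≤ 1) {f : Finset α → ℝ}
    {K : α → ℝ} (hf : ∀ e s, |f (insert e s) - f s| ≤ K e) {a σ : ℝ} (hσ : 0 < σ)
    (hK : ∑ e ∈ E, K e ^ 2 ≤ σ) (ha : 0 ≤ a) :
    prob E p (fun s => f s ≤ expect E p f - a) ≤ Real.exp (-(a ^ 2 / (4 * σ))) := by
  have hneg : ∀ e s, |-f (insert e s) - -f s| ≤ K e := fun e s => by
    rw [← neg_sub', abs_neg]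
    exact hf e s
  refine Eq.trans_le (prob_congr fun s _ => ?_)
    (prob_expect_add_le_le (f := fun s => -f s) hp0 hp1 hneg hσ hK ha)
  rw [expect_neg]
  constructor <;> intro h <;> linarith

lemma expect_half_pow_card_filter_le (hp0 : 0 ≤ p) (hp1 : p ≤ 1) {ι : Type*} (I : Finset ι)
    {A : ι → Set α} {P : ι → Finset α → Prop} (hA : (I : Set ι).PairwiseDisjoint A)
    (hP : ∀ i ∈ I, DeterminedBy (P i) (A i)) {r : ℝ} (hr : ∀ i ∈ I, r ≤ prob E p (P i)) :
    expect E p (fun s => (1 / 2) ^ (I.filter fun i => P i s).card) ≤ (1 - r / 2) ^ I.card := by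
  induction I using Finset.induction_on with
  | empty => simp
  | insert i I hi ih =>
    have ih' := ih (hA.subset (Finset.coe_subset.2 (Finset.subset_insert i I)))
      (fun j hj => hP j (Finset.mem_insert_of_mem hj))
      fun j hj => hr j (Finset.mem_insert_of_mem hj)
    have hi₁ : ∀ J ⊆ I, (insert i J).card = J.card + 1 := fun J hJ =>
      Finset.card_insert_of_notMem fun h => hi (hJ h)
    have hPi := hr i (Finset.mem_insert_self i I)
    have hPi₁ := prob_le_one (E := E) hp0 hp1 (P i)
    rw [expect_filter_insert hi hA hP fun J => (1 / 2) ^ J.card, hi₁ I subset_rfl, pow_succ']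
    simp only [hi₁ _ (Finset.filter_subset _ I), pow_succ', expect_const_mul]
    calc prob E p (P i) * (1 / 2 * expect E p fun s => (1 / 2) ^ (I.filter fun i => P i s).card) +
          (1 - prob E p (P i)) * expect E p (fun s => (1 / 2) ^ (I.filter fun i => P i s).card)
        = (1 - prob E p (P i) / 2) *
            expect E p (fun s => (1 / 2) ^ (I.filter fun i => P i s).card) := by ring
      _ ≤ (1 - prob E p (P i) / 2) * (1 - r / 2) ^ I.card := by
          gcongr
          linarith
      _ ≤ (1 - r / 2) * (1 - r / 2) ^ I.card := by
          gcongr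
          exact pow_nonneg (by linarith) _

/-- The exponential Markov inequality for `2 ^ -(number of events that occur)`. -/
lemma prob_card_filter_le_le (hp0 : 0 ≤ p) (hp1 : p ≤ 1) {ι : Type*} (I : Finset ι)
    {A : ι → Set α} {P : ι → Finset α → Prop} (hA : (I : Set ι).PairwiseDisjoint A)
    (hP : ∀ i ∈ I, DeterminedBy (P i) (A i)) {r : ℝ} (hr : ∀ i ∈ I, r ≤ prob E p (P i)) (m : ℝ) :
    prob E p (fun s => ((I.filter fun i => P i s).card : ℝ) ≤ m) ≤
      (2 : ℝ) ^ m * (1 - r / 2) ^ I.card := by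
  calc prob E p (fun s => ((I.filter fun i => P i s).card : ℝ) ≤ m)
      ≤ expect E p (fun s => (2 : ℝ) ^ m * (1 / 2) ^ (I.filter fun i => P i s).card) := by
        refine expect_mono hp0 hp1 fun s _ => ?_
        split_ifs with h
        · rw [one_div, inv_pow, ← div_eq_mul_inv, one_le_div (by positivity),
            ← Real.rpow_natCast]
          exact Real.rpow_le_rpow_of_exponent_le (by norm_num) h
        · positivity
    _ ≤ (2 : ℝ) ^ m * (1 - r / 2) ^ I.card := by
        rw [expect_const_mul]
        gcongr
        exact expect_half_pow_card_filter_le hp0 hp1 I hA hP hr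

end Concentration

section BinomialMean

/-- The mean of `φ` under the binomial distribution with parameters `m` and `r`, realised as the
law of the size of a random subset of `{0, …, m - 1}`. -/
def binomMean (m : ℕ) (r : ℝ) (φ : ℕ → ℝ) : ℝ := expect (Finset.range m) r fun s => φ s.card

@[simp] lemma binomMean_zero (r : ℝ) (φ : ℕ → ℝ) : binomMean 0 r φ = φ 0 := by simp [binomMean]

lemma expect_card {ι : Type*} (I : Finset ι) (r : ℝ) (φ : ℕ → ℝ) :
    expect I r (fun s => φ s.card) = binomMean I.card r φ := by
  simp only [binomMean, expect, Finset.card_range]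
  rw [Finset.sum_powerset_apply_card fun j => (r ^ j * (1 - r) ^ (I.card - j)) * φ j,
    Finset.sum_powerset_apply_card fun j => (r ^ j * (1 - r) ^ (I.card - j)) * φ j,
    Finset.card_range]

lemma binomMean_succ (m : ℕ) (r : ℝ) (φ : ℕ → ℝ) :
    binomMean (m + 1) r φ = r * binomMean m r (fun j => φ (j + 1)) + (1 - r) * binomMean m r φ := by
  rw [binomMean, Finset.range_add_one, expect_insert Finset.notMem_range_self, binomMean, binomMean]
  congr 2
  refine expect_congr fun s hs => ?_
  rw [Finset.card_insert_of_notMem fun h => Finset.notMem_range_self (hs h)]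

lemma binomMean_add (m : ℕ) (r : ℝ) (φ ψ : ℕ → ℝ) :
    binomMean m r (fun j => φ j + ψ j) = binomMean m r φ + binomMean m r ψ :=
  expect_add _ _

lemma binomMean_natCast (m : ℕ) (r : ℝ) : binomMean m r (fun j => (j : ℝ)) = m * r := by
  induction m with
  | zero => simp
  | succ m ih =>
    simp only [binomMean_succ, Nat.cast_add, binomMean_add, ih]
    simp only [binomMean, expect_const]
    push_cast
    ring

lemma binomMean_one_le (m : ℕ) (r : ℝ) :
    binomMean m r (fun j => if 1 ≤ j then 1 else 0) = 1 - (1 - r) ^ m := by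
  have h := prob_nonempty (E := Finset.range m) r
  rw [Finset.card_range] at h
  rw [← h]
  exact expect_congr fun s _ => by simp [Finset.nonempty_iff_ne_empty, Nat.one_le_iff_ne_zero]

lemma binomMean_two_le (m : ℕ) (r : ℝ) :
    binomMean (m + 1) r (fun j => if 2 ≤ j then 1 else 0) =
      1 - (1 - r) ^ (m + 1) - (m + 1) * r * (1 - r) ^ m := by
  induction m with
  | zero => simp [binomMean_succ]
  | succ m ih =>
    rw [binomMean_succ, ih]
    simp only [Nat.add_one_le_add_one_iff, show 2 = 1 + 1 from rfl]
    rw [binomMean_one_le]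
    push_cast
    ring

lemma binomMean_mul_two_le (m : ℕ) (r : ℝ) :
    binomMean (m + 1) r (fun j => if 2 ≤ j then (j : ℝ) else 0) =
      (m + 1) * r - (m + 1) * r * (1 - r) ^ m := by
  have hsplit : ∀ j : ℕ, (if 2 ≤ j then (j : ℝ) else 0) + (if 1 ≤ j then 1 else 0) =
      j + if 2 ≤ j then 1 else 0
    | 0 | 1 => by simp
    | j + 2 => by simp
  have hmean := congrArg (binomMean (m + 1) r) (funext hsplit)
  rw [binomMean_add, binomMean_add, binomMean_natCast, binomMean_one_le, binomMean_two_le] at hmean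
  push_cast at hmean
  linarith

lemma continuous_binomMean (m : ℕ) (φ : ℕ → ℝ) : Continuous fun r => binomMean m r φ := by
  unfold binomMean expect
  fun_prop

end BinomialMean

/-! ### Non-backtracking walks below the girth -/

section Girth

variable {W : Type*} {G : SimpleGraph W}

lemma isAcyclic_fromEdgeSet_of_length_lt_girth {l : List (Sym2 W)} (hl : ∀ e ∈ l, e ∈ G.edgeSet)
    (hlen : l.length < G.girth) : (SimpleGraph.fromEdgeSet {e | e ∈ l}).IsAcyclic := by
  intro a c hc
  have hle : SimpleGraph.fromEdgeSet {e | e ∈ l} ≤ G := by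
    rw [← SimpleGraph.edgeSet_subset_edgeSet, SimpleGraph.edgeSet_fromEdgeSet]
    exact fun e he => hl e he.1
  have hgirth : G.girth ≤ c.length := by
    simpa using SimpleGraph.girth_le_length (hc.mapLe hle)
  have hsub : c.edges ⊆ l := fun e he => by
    have := c.edges_subset_edgeSet he
    rw [SimpleGraph.edgeSet_fromEdgeSet] at this
    exact this.1
  have hlen' : c.edges.length ≤ l.length :=
    (List.subperm_of_subset hc.isTrail.edges_nodup hsub).length_le
  rw [SimpleGraph.Walk.length_edges] at hlen'
  omega

lemma mem_edgeSet_fromEdgeSet_of_subset {l : List (Sym2 W)} (hl : ∀ e ∈ l, e ∈ G.edgeSet) :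
    ∀ e ∈ l, e ∈ (SimpleGraph.fromEdgeSet {e | e ∈ l}).edgeSet := by
  intro e he
  rw [SimpleGraph.edgeSet_fromEdgeSet]
  exact ⟨he, G.not_isDiag_of_mem_edgeSet (hl e he)⟩

lemma isPath_of_isChain_of_length_lt_girth {u w : W} {p : G.Walk u w}
    (hp : p.edges.IsChain (· ≠ ·)) (hlen : p.length < G.girth) : p.IsPath := by
  have hG : ∀ e ∈ p.edges, e ∈ G.edgeSet := fun _ he => p.edges_subset_edgeSet he
  have hac := isAcyclic_fromEdgeSet_of_length_lt_girth hG (by simpa using hlen)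
  have hpath : (p.transfer _ (mem_edgeSet_fromEdgeSet_of_subset hG)).IsPath := by
    rwa [hac.isPath_iff_isChain, SimpleGraph.Walk.edges_transfer]
  rw [SimpleGraph.Walk.isPath_def] at hpath ⊢
  simpa using hpath

lemma eq_of_isChain_of_length_lt_girth {u w : W} {p q : G.Walk u w}
    (hp : p.edges.IsChain (· ≠ ·)) (hq : q.edges.IsChain (· ≠ ·))
    (hlen : p.length + q.length < G.girth) : p = q := by
  have hG : ∀ e ∈ p.edges ++ q.edges, e ∈ G.edgeSet := fun e he =>
    (List.mem_append.1 he).elim (p.edges_subset_edgeSet ·) (q.edges_subset_edgeSet ·)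
  have hac := isAcyclic_fromEdgeSet_of_length_lt_girth hG (by simpa using hlen)
  have hmem := mem_edgeSet_fromEdgeSet_of_subset hG
  have hp' : (p.transfer _ fun e he => hmem e (List.mem_append_left _ he)).IsPath := by
    rwa [hac.isPath_iff_isChain, SimpleGraph.Walk.edges_transfer]
  have hq' : (q.transfer _ fun e he => hmem e (List.mem_append_right _ he)).IsPath := by
    rwa [hac.isPath_iff_isChain, SimpleGraph.Walk.edges_transfer]
  have hsupp := congrArg (fun r => r.1.support)
    ((hac.subsingleton_path u w).elim ⟨_, hp'⟩ ⟨_, hq'⟩)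
  simp only [SimpleGraph.Walk.support_transfer] at hsupp
  exact SimpleGraph.Walk.ext_support hsupp

lemma girth_le_card [Fintype W] (G : SimpleGraph W) : G.girth ≤ Fintype.card W := by
  by_cases h : G.IsAcyclic
  · simp [SimpleGraph.girth_eq_zero.2 h]
  · obtain ⟨a, w, hw, hlen⟩ := SimpleGraph.exists_girth_eq_length.2 h
    have := hw.support_nodup.length_le_card
    simpa [hlen] using this

end Girth

/-! ### Extendable darts -/

section Extendable

/-- Some non-backtracking walk in `H` with `k + 1` edges starts with the dart `(x, y)`. For
percolation on a graph of large girth, this is the survival of a branching process up to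
generation `k + 1`. -/
def Extendable {W : Type*} (H : SimpleGraph W) : ℕ → W → W → Prop
  | 0, x, y => H.Adj x y
  | k + 1, x, y => H.Adj x y ∧ ∃ z, z ≠ x ∧ Extendable H k y z

variable {W : Type*} {G H : SimpleGraph W} {k : ℕ} {x y z : W}

namespace Extendable

lemma adj (h : Extendable H k x y) : H.Adj x y := by
  cases k with
  | zero => exact h
  | succ k => exact h.1

lemma of_succ (h : Extendable H (k + 1) x y) : Extendable H k x y := by
  induction k generalizing x y with
  | zero => exact h.1
  | succ k ih => exact ⟨h.1, h.2.imp fun z hz => ⟨hz.1, ih hz.2⟩⟩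

lemma mono (hGH : G ≤ H) (h : Extendable G k x y) : Extendable H k x y := by
  induction k generalizing x y with
  | zero => exact hGH h
  | succ k ih => exact ⟨hGH h.1, h.2.imp fun z hz => ⟨hz.1, ih hz.2⟩⟩

lemma reverse_dart (hxy : H.Adj x y) (hzy : z ≠ y) (h : Extendable H k x z) :
    Extendable H k y x :=
  of_succ ⟨hxy.symm, z, hzy, h⟩

lemma of_two_le_ncard (hH : ∀ v ∈ H.support, 2 ≤ (H.neighborSet v).ncard) (k : ℕ)
    (h : H.Adj x y) : Extendable H k x y := by
  induction k generalizing x y with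
  | zero => exact h
  | succ k ih =>
    obtain ⟨z, hyz, hzx⟩ := Set.exists_ne_of_one_lt_ncard (hH y ⟨x, h.symm⟩) x
    exact ⟨h, z, hzx, ih hyz⟩

lemma of_isPath {w : W} (h : H.Adj x y) (p : H.Walk y w)
    (hp : (SimpleGraph.Walk.cons h p).IsPath) (hk : k ≤ p.length) : Extendable H k x y := by
  induction k generalizing x y with
  | zero => exact h
  | succ k ih =>
    cases p with
    | nil => simp at hk
    | @cons _ z _ h' p =>
      rw [SimpleGraph.Walk.cons_isPath_iff] at hp
      refine ⟨h, z, ?_, ih h' p hp.1 (by simpa using hk)⟩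
      rintro rfl
      exact hp.2 (by simp)

lemma exists_of_isPath {v w : W} {p : H.Walk v w} (hp : p.IsPath) (hk : k < p.length) :
    ∃ z, Extendable H k v z := by
  cases p with
  | nil => simp at hk
  | cons h p =>
    rw [SimpleGraph.Walk.length_cons] at hk
    exact ⟨_, .of_isPath h p hp (by omega)⟩

lemma exists_walk (h : Extendable H k x y) :
    ∃ (w : W) (p : H.Walk y w), p.length = k ∧
      (SimpleGraph.Walk.cons h.adj p).edges.IsChain (· ≠ ·) := by
  induction k generalizing x y with
  | zero => exact ⟨y, .nil, rfl, by simp⟩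
  | succ k ih =>
    obtain ⟨hxy, z, hzx, hz⟩ := h
    obtain ⟨w, p, hp, hc⟩ := ih hz
    refine ⟨w, .cons hz.adj p, by simp [hp], ?_⟩
    simp only [SimpleGraph.Walk.edges_cons] at hc ⊢
    refine List.isChain_cons_cons.2 ⟨fun he => ?_, hc⟩
    rcases Sym2.eq_iff.1 he with ⟨-, hyz⟩ | ⟨hxz, -⟩
    · exact hz.adj.ne hyz
    · exact hzx hxz.symm

end Extendable

/-- The edges of `G` on non-backtracking walks with at most `k + 1` edges starting with the
dart `(x, y)`: whether this dart is `k`-extendable in a subgraph depends on no other edges. -/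
def branch (G : SimpleGraph W) : ℕ → W → W → Set (Sym2 W)
  | 0, x, y => {s(x, y)}
  | k + 1, x, y => {e | e = s(x, y) ∨ ∃ z, G.Adj y z ∧ z ≠ x ∧ e ∈ branch G k y z}

lemma mk_mem_branch (G : SimpleGraph W) (k : ℕ) (x y : W) : s(x, y) ∈ branch G k x y := by
  cases k with
  | zero => rfl
  | succ k => exact Or.inl rfl

lemma exists_walk_of_mem_branch (hyz : G.Adj y z) {e : Sym2 W} (he : e ∈ branch G k y z) :
    ∃ (a b : W) (h : G.Adj a b) (p : G.Walk y a), e = s(a, b) ∧ p.length ≤ k ∧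
      (p.concat h).edges.IsChain (· ≠ ·) ∧ (p.concat h).edges.head? = some s(y, z) := by
  induction k generalizing y z with
  | zero => exact ⟨y, z, hyz, .nil, he, by simp, by simp, by simp⟩
  | succ k ih =>
    rcases he with rfl | ⟨z', hz', hne, he⟩
    · exact ⟨y, z, hyz, .nil, rfl, by simp, by simp, by simp⟩
    · obtain ⟨a, b, h, p, rfl, hl, hc, hh⟩ := ih hz' he
      refine ⟨a, b, h, .cons hyz p, rfl, by simpa using hl, ?_, by simp⟩
      rw [SimpleGraph.Walk.concat_cons, SimpleGraph.Walk.edges_cons, List.isChain_cons]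
      refine ⟨fun f hf heq => ?_, hc⟩
      rw [hh, Option.mem_some_iff] at hf
      rcases Sym2.eq_iff.1 (heq.trans hf.symm) with ⟨h1, -⟩ | ⟨h1, -⟩
      · exact hyz.ne h1
      · exact hne h1.symm

lemma disjoint_branch (hk : 2 * k + 2 < G.girth) {z' : W} (hz : G.Adj y z) (hz' : G.Adj y z')
    (hne : z ≠ z') : Disjoint (branch G k y z) (branch G k y z') := by
  rw [Set.disjoint_left]
  intro e he he'
  obtain ⟨a, b, h, p, rfl, hl, hc, hh⟩ := exists_walk_of_mem_branch hz he
  obtain ⟨a', b', h', p', heq, hl', hc', hh'⟩ := exists_walk_of_mem_branch hz' he'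
  have hfirst : s(y, z) ≠ s(y, z') := fun h =>
    (Sym2.eq_iff.1 h).elim (fun h => hne h.2) fun h => hz'.ne h.1
  -- Two non-backtracking walks reaching `e` coincide, up to deleting `e` from one of them when
  -- they traverse it in opposite directions, so they have the same first edge.
  rcases Sym2.eq_iff.1 heq with ⟨rfl, rfl⟩ | ⟨rfl, rfl⟩
  · have := eq_of_isChain_of_length_lt_girth hc hc'
      (by simp only [SimpleGraph.Walk.length_concat]; omega)
    rw [this, hh'] at hh
    exact hfirst (Option.some.inj hh).symm
  · have hcp : p.edges.IsChain (· ≠ ·) := by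
      rw [SimpleGraph.Walk.edges_concat, List.concat_eq_append] at hc
      exact hc.left_of_append
    have := eq_of_isChain_of_length_lt_girth hcp hc'
      (by simp only [SimpleGraph.Walk.length_concat]; omega)
    rw [SimpleGraph.Walk.edges_concat, List.concat_eq_append, List.head?_append, this, hh'] at hh
    exact hfirst (Option.some.inj hh).symm

/-- The spanning subgraph of `G` with edge set `E(G) ∩ s`. -/
def keep (G : SimpleGraph W) (s : Finset (Sym2 W)) : SimpleGraph W where
  Adj x y := G.Adj x y ∧ s(x, y) ∈ s
  symm := ⟨fun x y h => ⟨h.1.symm, by rw [Sym2.eq_swap]; exact h.2⟩⟩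
  loopless := ⟨fun x h => G.loopless.irrefl x h.1⟩

lemma keep_le (s : Finset (Sym2 W)) : keep G s ≤ G := fun _ _ h => h.1

lemma keep_mono {s t : Finset (Sym2 W)} (h : s ⊆ t) : keep G s ≤ keep G t :=
  fun _ _ hx => ⟨hx.1, h hx.2⟩

lemma fromEdgeSet_eq_keep {s : Finset (Sym2 W)} (hs : ∀ e ∈ s, e ∈ G.edgeSet) :
    SimpleGraph.fromEdgeSet (s : Set (Sym2 W)) = keep G s := by
  ext x y
  simp only [SimpleGraph.fromEdgeSet_adj, Finset.mem_coe, keep]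
  exact ⟨fun h => ⟨hs _ h.1, h.1⟩, fun h => ⟨h.2, h.1.ne⟩⟩

lemma determinedBy_extendable (k : ℕ) (x y : W) :
    DeterminedBy (fun s => Extendable (keep G s) k x y) (branch G k x y) := by
  induction k generalizing x y with
  | zero =>
    intro s t hst
    simp [Extendable, keep, hst s(x, y) rfl]
  | succ k ih =>
    intro s t hst
    have hxy : s(x, y) ∈ s ↔ s(x, y) ∈ t := hst _ (Or.inl rfl)
    simp only [Extendable, keep, hxy]
    congr 1
    refine propext (exists_congr fun z => and_congr_right fun hz => ?_)
    by_cases hyz : G.Adj y z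
    · exact (ih y z s t fun e he => hst e (Or.inr ⟨z, hyz, hz, he⟩)).to_iff
    · exact iff_of_false (fun h => hyz h.adj.1) fun h => hyz h.adj.1

end Extendable

/-! ### Extension statistics -/

section Stat

variable {W : Type*} [Fintype W] {G : SimpleGraph W} {d k : ℕ}

/-- The vertices at distance at most `k` from `v`. -/
def ball (G : SimpleGraph W) (k : ℕ) (v : W) : Finset W :=
  Finset.univ.filter fun w => ∃ p : G.Walk v w, p.length ≤ k

lemma mem_ball_of_walk {v w : W} (p : G.Walk v w) (hp : p.length ≤ k) : w ∈ ball G k v := by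
  simpa [ball] using ⟨p, hp⟩

lemma card_ball_le (hd : ∀ v, G.degree v ≤ d) (k : ℕ) (v : W) :
    (ball G k v).card ≤ (d + 1) ^ k := by
  induction k generalizing v with
  | zero =>
    refine Finset.card_le_one.2 fun a ha b hb => ?_
    simp only [ball, Finset.mem_filter_univ, Nat.le_zero] at ha hb
    obtain ⟨⟨p, hp⟩, q, hq⟩ := And.intro ha hb
    rw [← p.eq_of_length_eq_zero hp, q.eq_of_length_eq_zero hq]
  | succ k ih =>
    have hsub : ball G (k + 1) v ⊆ insert v ((G.neighborFinset v).biUnion (ball G k)) := by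
      intro w hw
      obtain ⟨p, hp⟩ := (Finset.mem_filter.1 hw).2
      cases p with
      | nil => exact Finset.mem_insert_self _ _
      | @cons _ u _ h p =>
        exact Finset.mem_insert_of_mem <| Finset.mem_biUnion.2
          ⟨u, by simpa using h, mem_ball_of_walk p (by simpa using hp)⟩
    calc (ball G (k + 1) v).card
        ≤ ((G.neighborFinset v).biUnion (ball G k)).card + 1 :=
          (Finset.card_le_card hsub).trans (Finset.card_insert_le _ _)
      _ ≤ d * (d + 1) ^ k + (d + 1) ^ k := by
          refine Nat.add_le_add ?_ (Nat.one_le_pow _ _ d.succ_pos)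
          exact (Finset.card_biUnion_le_card_mul _ _ _ fun u _ => ih u).trans
            (Nat.mul_le_mul_right _ (hd v))
      _ = (d + 1) ^ (k + 1) := by ring

/-- The number of `k`-extendable darts out of `v` in the subgraph of `G` with edges in `s`. -/
def extCount (G : SimpleGraph W) (k : ℕ) (v : W) (s : Finset (Sym2 W)) : ℕ :=
  ((G.neighborFinset v).filter fun z => Extendable (keep G s) k v z).card

/-- The linear statistic of the extension counts with weight `φ`. The sizes of the 2-core are
approximated by such statistics. -/
def stat (G : SimpleGraph W) (k : ℕ) (φ : ℕ → ℝ) (s : Finset (Sym2 W)) : ℝ :=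
  ∑ v, φ (extCount G k v s)

lemma extCount_le (hd : ∀ v, G.degree v ≤ d) (k : ℕ) (v : W) (s : Finset (Sym2 W)) :
    extCount G k v s ≤ d :=
  (Finset.card_filter_le _ _).trans (hd v)

lemma extCount_insert_eq [DecidableEq W] {v : W} {e : Sym2 W} (hv : ∀ a ∈ e, v ∉ ball G k a)
    (s : Finset (Sym2 W)) : extCount G k v (insert e s) = extCount G k v s := by
  unfold extCount
  congr 1
  refine Finset.filter_congr fun z hz => ?_
  have he : e ∉ branch G k v z := by
    intro he
    obtain ⟨a, b, -, p, rfl, hp, -⟩ :=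
      exists_walk_of_mem_branch ((G.mem_neighborFinset v z).1 hz) he
    exact hv a (Sym2.mem_mk_left a b) (mem_ball_of_walk p.reverse (by simpa using hp))
  exact ((determinedBy_extendable k v z).insert_eq he s).to_iff

lemma abs_stat_insert_sub_le [DecidableEq W] (hd : ∀ v, G.degree v ≤ d) (k : ℕ) {φ : ℕ → ℝ}
    {M : ℝ} (hφ : ∀ i ≤ d, 0 ≤ φ i ∧ φ i ≤ M) (e : Sym2 W) (s : Finset (Sym2 W)) :
    |stat G k φ (insert e s) - stat G k φ s| ≤ 2 * (d + 1) ^ k * M := by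
  induction e with | _ a b
  have hM : 0 ≤ M := (hφ 0 (Nat.zero_le _)).1.trans (hφ 0 (Nat.zero_le _)).2
  set B := ball G k a ∪ ball G k b
  have hcard : (B.card : ℝ) ≤ 2 * (d + 1) ^ k := by
    have := (Finset.card_union_le (ball G k a) (ball G k b)).trans
      (Nat.add_le_add (card_ball_le hd k a) (card_ball_le hd k b))
    rw [← two_mul] at this
    exact_mod_cast this
  have hterm : ∀ v, |φ (extCount G k v (insert s(a, b) s)) - φ (extCount G k v s)| ≤
      if v ∈ B then M else 0 := by
    intro v
    split_ifs with hv
    · have h := hφ _ (extCount_le hd k v (insert s(a, b) s))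
      have h' := hφ _ (extCount_le hd k v s)
      exact abs_sub_le_iff.2 ⟨by linarith, by linarith⟩
    · rw [extCount_insert_eq, sub_self, abs_zero]
      intro c hc hvc
      rcases Sym2.mem_iff.1 hc with rfl | rfl
      · exact hv (Finset.mem_union_left _ hvc)
      · exact hv (Finset.mem_union_right _ hvc)
  calc |stat G k φ (insert s(a, b) s) - stat G k φ s|
      = |∑ v, (φ (extCount G k v (insert s(a, b) s)) - φ (extCount G k v s))| := by
        rw [Finset.sum_sub_distrib, stat, stat]
    _ ≤ ∑ v, if v ∈ B then M else 0 :=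
        (Finset.abs_sum_le_sum_abs _ _).trans (Finset.sum_le_sum fun v _ => hterm v)
    _ = B.card * M := by simp [Finset.sum_ite_mem]
    _ ≤ _ := by gcongr

end Stat

section Mean

variable {W : Type} [Fintype W] {G : SimpleGraph W} {d k : ℕ} {p : ℝ}

@[simp] lemma mem_edgeFinset' {e : Sym2 W} : e ∈ edgeFinset' G ↔ e ∈ G.edgeSet := by
  simp [edgeFinset']

lemma card_edgeFinset'_le (hd : ∀ v, G.degree v ≤ d) :
    (edgeFinset' G).card ≤ d * Fintype.card W := by
  have hE : edgeFinset' G = G.edgeFinset := by ext; simp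
  have hsum := G.sum_degrees_eq_twice_card_edges
  have hle : ∑ v, G.degree v ≤ d * Fintype.card W := by
    rw [mul_comm, ← smul_eq_mul, ← Finset.card_univ]
    exact Finset.sum_le_card_nsmul _ _ d fun v _ => hd v
  rw [hE]
  omega

/-- The probability that a given dart of a `d`-regular tree is `k`-extendable in bond percolation
with parameter `p`, by the recursion of the associated Galton–Watson process. -/
def extProb (p : ℝ) (d : ℕ) : ℕ → ℝ
  | 0 => p
  | k + 1 => p * (1 - (1 - extProb p d k) ^ (d - 1))

lemma extendable_keep_succ_iff {x y : W} (hxy : G.Adj x y) (s : Finset (Sym2 W)) :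
    Extendable (keep G s) (k + 1) x y ↔ s(x, y) ∈ s ∧
      (((G.neighborFinset y).erase x).filter fun z => Extendable (keep G s) k y z).Nonempty := by
  simp only [Extendable, Finset.Nonempty, Finset.mem_filter, Finset.mem_erase,
    SimpleGraph.mem_neighborFinset]
  exact and_congr (and_iff_right hxy) <| exists_congr fun z =>
    ⟨fun h => ⟨⟨h.1, h.2.adj.1⟩, h.2⟩, fun h => ⟨h.1.1, h.2⟩⟩

lemma prob_extendable (hd : ∀ v, G.degree v = d) (hk : 2 * k + 2 < G.girth) {x y : W}
    (hxy : G.Adj x y) :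
    prob (edgeFinset' G) p (fun s => Extendable (keep G s) k x y) = extProb p d k := by
  have he : s(x, y) ∈ edgeFinset' G := mem_edgeFinset'.2 hxy
  induction k generalizing x y with
  | zero => exact (prob_congr fun s _ => and_iff_right hxy).trans (prob_mem he)
  | succ k ih =>
    have hk' : 2 * k + 2 < G.girth := by omega
    set I := (G.neighborFinset y).erase x
    have hadj : ∀ z ∈ I, G.Adj y z := fun z hz => by simpa using Finset.mem_of_mem_erase hz
    have hcard : I.card = d - 1 := by
      rw [Finset.card_erase_of_mem (by simpa using hxy.symm), G.card_neighborFinset_eq_degree, hd]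
    have hdet : ∀ z ∈ I, DeterminedBy (fun s => Extendable (keep G s) k y z) (branch G k y z) :=
      fun z _ => determinedBy_extendable k y z
    have hdisj : (I : Set W).PairwiseDisjoint (branch G k y) :=
      fun z hz z' hz' hne => disjoint_branch hk' (hadj z hz) (hadj z' hz') hne
    have hroot : Disjoint {s(x, y)} (⋃ z ∈ I, branch G k y z) := by
      rw [Set.disjoint_singleton_left, Set.mem_iUnion₂]
      rintro ⟨z, hz, hmem⟩
      refine Set.disjoint_left.1 (disjoint_branch hk' (hadj z hz) hxy.symm
        (Finset.ne_of_mem_erase hz)) hmem ?_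
      rw [Sym2.eq_swap]
      exact mk_mem_branch G k y x
    have hnonempty : prob (edgeFinset' G) p
        (fun s => (I.filter fun z => Extendable (keep G s) k y z).Nonempty) =
        1 - (1 - extProb p d k) ^ (d - 1) := by
      rw [← hcard, ← prob_nonempty]
      exact prob_filter I hdisj hdet
        (fun z hz => ih hk' (hadj z hz) (mem_edgeFinset'.2 (hadj z hz))) Finset.Nonempty
    rw [prob_congr fun s _ => extendable_keep_succ_iff hxy s, prob_and hroot (determinedBy_mem _)
      ((DeterminedBy.filter hdet).comp Finset.Nonempty), prob_mem he, hnonempty, extProb]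

lemma expect_stat (hd : ∀ v, G.degree v = d) (hk : 2 * k + 2 < G.girth) (φ : ℕ → ℝ) :
    expect (edgeFinset' G) p (stat G k φ) =
      Fintype.card W * binomMean d (extProb p d k) φ := by
  have hvertex : ∀ v, expect (edgeFinset' G) p (fun s => φ (extCount G k v s)) =
      binomMean d (extProb p d k) φ := by
    intro v
    have hadj : ∀ z ∈ G.neighborFinset v, G.Adj v z := fun z hz => by simpa using hz
    rw [← hd v, ← G.card_neighborFinset_eq_degree, ← expect_card, G.card_neighborFinset_eq_degree,
      hd v]
    exact expect_filter _
      (fun z hz z' hz' hne => disjoint_branch hk (hadj z hz) (hadj z' hz') hne)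
      (fun z _ => determinedBy_extendable k v z) (fun z hz => prob_extendable hd hk (hadj z hz))
      fun J => φ J.card
  unfold stat
  simp only [expect_sum, hvertex, Finset.sum_const, nsmul_eq_mul, Finset.card_univ]

/-- The exponential rate at which extension statistics concentrate. -/
def statRate (d k : ℕ) (η : ℝ) : ℝ := η ^ 2 / (4 * (2 * (d + 1) ^ k * d) ^ 2 * d)

lemma statRate_pos (hd : 0 < d) (k : ℕ) {η : ℝ} (hη : 0 < η) : 0 < statRate d k η := by
  unfold statRate
  positivity

lemma sum_edgeFinset'_sq_le (hd : ∀ v, G.degree v ≤ d) (K : ℝ) :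
    ∑ _e ∈ edgeFinset' G, K ^ 2 ≤ K ^ 2 * (d * Fintype.card W) := by
  rw [Finset.sum_const, nsmul_eq_mul, mul_comm]
  gcongr
  exact_mod_cast card_edgeFinset'_le hd

lemma exp_statRate [Nonempty W] (hd : 0 < d) (k : ℕ) (η : ℝ) :
    Real.exp (-((Fintype.card W * η) ^ 2 /
        (4 * ((2 * (d + 1) ^ k * d) ^ 2 * (d * Fintype.card W))))) =
      Real.exp (-statRate d k η * Fintype.card W) := by
  have : (0 : ℝ) < Fintype.card W := by exact_mod_cast Fintype.card_pos
  unfold statRate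
  congr 1
  field_simp

variable [Nonempty W] {φ : ℕ → ℝ} {η : ℝ}

lemma prob_le_stat_le (hp0 : 0 ≤ p) (hp1 : p ≤ 1) (hd0 : 0 < d) (hd : ∀ v, G.degree v = d)
    (hk : 2 * k + 2 < G.girth) (hφ : ∀ i ≤ d, 0 ≤ φ i ∧ φ i ≤ d) (hη : 0 ≤ η) :
    prob (edgeFinset' G) p
        (fun s => Fintype.card W * (binomMean d (extProb p d k) φ + η) ≤ stat G k φ s) ≤
      Real.exp (-statRate d k η * Fintype.card W) := by
  have hd' : ∀ v, G.degree v ≤ d := fun v => (hd v).le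
  rw [← exp_statRate hd0]
  simp only [mul_add, ← expect_stat hd hk]
  exact prob_expect_add_le_le hp0 hp1 (abs_stat_insert_sub_le hd' k hφ) (by positivity)
    (sum_edgeFinset'_sq_le hd' _) (by positivity)

lemma prob_stat_le_le (hp0 : 0 ≤ p) (hp1 : p ≤ 1) (hd0 : 0 < d) (hd : ∀ v, G.degree v = d)
    (hk : 2 * k + 2 < G.girth) (hφ : ∀ i ≤ d, 0 ≤ φ i ∧ φ i ≤ d) (hη : 0 ≤ η) :
    prob (edgeFinset' G) p
        (fun s => stat G k φ s ≤ Fintype.card W * (binomMean d (extProb p d k) φ - η)) ≤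
      Real.exp (-statRate d k η * Fintype.card W) := by
  have hd' : ∀ v, G.degree v ≤ d := fun v => (hd v).le
  rw [← exp_statRate hd0]
  simp only [mul_sub, ← expect_stat hd hk]
  exact prob_le_expect_sub_le hp0 hp1 (abs_stat_insert_sub_le hd' k hφ) (by positivity)
    (sum_edgeFinset'_sq_le hd' _) (by positivity)

end Mean

section Limit

variable {p p₁ r x y : ℝ} {d m : ℕ}

lemma one_sub_one_sub_pow (x : ℝ) (m : ℕ) :
    1 - (1 - x) ^ m = x * ∑ i ∈ Finset.range m, (1 - x) ^ i := by
  rw [← geom_sum_mul_neg (1 - x) m]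
  ring

lemma geom_sum_one_sub_lt (hm : 2 ≤ m) (hxy : x < y) (hy : y ≤ 1) :
    ∑ i ∈ Finset.range m, (1 - y) ^ i < ∑ i ∈ Finset.range m, (1 - x) ^ i := by
  refine Finset.sum_lt_sum (fun i _ => ?_) ⟨1, Finset.mem_range.2 (by omega), by simpa using hxy⟩
  exact pow_le_pow_left₀ (by linarith) (by linarith) i

lemma one_sub_one_sub_pow_mono (hxy : x ≤ y) (hy : y ≤ 1) (m : ℕ) :
    1 - (1 - x) ^ m ≤ 1 - (1 - y) ^ m :=
  sub_le_sub_left (pow_le_pow_left₀ (by linarith) (by linarith) m) 1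

lemma extProb_mem_Icc (hp0 : 0 ≤ p) (hp1 : p ≤ 1) (d k : ℕ) : extProb p d k ∈ Set.Icc 0 p := by
  induction k with
  | zero => exact ⟨hp0, le_rfl⟩
  | succ k ih =>
    have h0 : 0 ≤ 1 - extProb p d k := by linarith [ih.2]
    have h1 : (1 - extProb p d k) ^ (d - 1) ≤ 1 := pow_le_one₀ h0 (by linarith [ih.1])
    have h2 : 0 ≤ (1 - extProb p d k) ^ (d - 1) := pow_nonneg h0 _
    exact ⟨mul_nonneg hp0 (by linarith), mul_le_of_le_one_right hp0 (by linarith)⟩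

lemma extProb_le_one (hp0 : 0 ≤ p) (hp1 : p ≤ 1) (d k : ℕ) : extProb p d k ≤ 1 :=
  (extProb_mem_Icc hp0 hp1 d k).2.trans hp1

lemma le_extProb (hp0 : 0 ≤ p) (hp1 : p ≤ 1) (hxp : x ≤ p)
    (hx : x ≤ p * (1 - (1 - x) ^ (d - 1))) (k : ℕ) : x ≤ extProb p d k := by
  induction k with
  | zero => exact hxp
  | succ k ih =>
    exact hx.trans (mul_le_mul_of_nonneg_left
      (one_sub_one_sub_pow_mono ih (extProb_le_one hp0 hp1 d k) _) hp0)

lemma extProb_mono (hp₁ : 0 ≤ p₁) (h : p₁ ≤ p) (hp1 : p ≤ 1) (d k : ℕ) :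
    extProb p₁ d k ≤ extProb p d k := by
  induction k with
  | zero => exact h
  | succ k ih =>
    have hle := extProb_le_one (hp₁.trans h) hp1 d k
    have hpow : (1 - extProb p₁ d k) ^ (d - 1) ≤ 1 :=
      pow_le_one₀ (by linarith) (by linarith [(extProb_mem_Icc hp₁ (h.trans hp1) d k).1])
    exact mul_le_mul h (one_sub_one_sub_pow_mono ih hle _) (by linarith) (hp₁.trans h)

lemma antitone_extProb (hp0 : 0 ≤ p) (hp1 : p ≤ 1) (d : ℕ) : Antitone (extProb p d) := by
  refine antitone_nat_of_succ_le fun k => ?_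
  induction k with
  | zero => exact (extProb_mem_Icc hp0 hp1 d 1).2
  | succ k ih =>
    exact mul_le_mul_of_nonneg_left
      (one_sub_one_sub_pow_mono ih (extProb_le_one hp0 hp1 d k) _) hp0

lemma tendsto_extProb (hd : 3 ≤ d) (hp0 : 0 < p) (hp1 : p ≤ 1) (hr0 : 0 < r) (hrp : r ≤ p)
    (hr : p * (1 - (1 - r) ^ (d - 1)) = r) :
    Filter.Tendsto (extProb p d) Filter.atTop (nhds r) := by
  have hbdd : BddBelow (Set.range (extProb p d)) :=
    ⟨0, by rintro _ ⟨k, rfl⟩; exact (extProb_mem_Icc hp0.le hp1 d k).1⟩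
  have ht := tendsto_atTop_ciInf (antitone_extProb hp0.le hp1 d) hbdd
  set l := ⨅ k, extProb p d k
  have hlp : l ≤ p := ciInf_le hbdd 0
  have hrl : r ≤ l := le_ciInf fun k => le_extProb hp0.le hp1 hrp hr.ge k
  have hl : l = p * (1 - (1 - l) ^ (d - 1)) :=
    tendsto_nhds_unique ((Filter.tendsto_add_atTop_iff_nat 1).2 ht)
      ((((tendsto_const_nhds.sub ht).pow (d - 1)).const_sub 1).const_mul p)
  -- A positive fixed point `x` satisfies `p * ∑ i < d - 1, (1 - x) ^ i = 1`, and the left-hand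
  -- side is strictly decreasing.
  suffices hlr : ¬r < l by rwa [← hrl.eq_of_not_lt hlr] at ht
  intro hlt
  have hsum := geom_sum_one_sub_lt (m := d - 1) (by omega) hlt (hlp.trans hp1)
  rw [one_sub_one_sub_pow, mul_left_comm] at hl hr
  have hl' := (eq_comm.trans (mul_eq_left₀ (hr0.trans hlt).ne')).1 hl
  exact (mul_lt_mul_of_pos_left hsum hp0).ne (hl'.trans ((mul_eq_left₀ hr0.ne').1 hr).symm)

lemma exists_lt_forall_le_extProb (hd : 3 ≤ d) (hp0 : 0 < p) (hp1 : p ≤ 1) (hrp : r ≤ p)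
    (hr : p * (1 - (1 - r) ^ (d - 1)) = r) (hx0 : 0 < x) (hxr : x < r) :
    ∃ p₁, 0 < p₁ ∧ p₁ < p ∧ ∀ k, x ≤ extProb p₁ d k := by
  set g := ∑ i ∈ Finset.range (d - 1), (1 - x) ^ i with hg
  have hgp : 1 < p * g := by
    rw [one_sub_one_sub_pow, mul_left_comm] at hr
    rw [← (mul_eq_left₀ (hx0.trans hxr).ne').1 hr]
    exact mul_lt_mul_of_pos_left (geom_sum_one_sub_lt (by omega) hxr (hrp.trans hp1)) hp0
  have hg0 : 0 < g := pos_of_mul_pos_right (one_pos.trans hgp) hp0.le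
  have hlt : max x (1 / g) < p := max_lt (hxr.trans_le hrp) ((div_lt_iff₀ hg0).2 hgp)
  have hpos : 0 < max x (1 / g) := lt_max_of_lt_left hx0
  refine ⟨_, hpos, hlt, le_extProb hpos.le (hlt.le.trans hp1) (le_max_left _ _) ?_⟩
  rw [one_sub_one_sub_pow, ← hg, mul_left_comm]
  exact le_mul_of_one_le_right hx0.le ((div_le_iff₀ hg0).1 (le_max_right _ _))

/-- At `x = p * (1 - q)` the recursion for `extProb` is the fixed-point equation for `q`. -/
lemma exists_extProb_close {q : ℝ} (hd : 3 ≤ d) (hp0 : 0 < p) (hp1 : p ≤ 1) (hq0 : 0 ≤ q)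
    (hq1 : q < 1) (hq : q = (1 - p + p * q) ^ (d - 1)) {η : ℝ} (hη : 0 < η) :
    ∃ p₁, 0 < p₁ ∧ p₁ < p ∧ ∃ k₀, ∀ k ≥ k₀,
      |extProb p d k - p * (1 - q)| < η ∧ |extProb p₁ d k - p * (1 - q)| < η := by
  set r := p * (1 - q) with hr
  have hr0 : 0 < r := mul_pos hp0 (by linarith)
  have hrp : r ≤ p := mul_le_of_le_one_right hp0.le (by linarith)
  have hfix : p * (1 - (1 - r) ^ (d - 1)) = r := by
    rw [show 1 - r = 1 - p + p * q by rw [hr]; ring, ← hq]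
  obtain ⟨x, hx, hxr⟩ : ∃ x, max 0 (r - η) < x ∧ x < r :=
    exists_between (max_lt hr0 (by linarith))
  obtain ⟨hx0, hxη⟩ := max_lt_iff.1 hx
  obtain ⟨p₁, hp₁0, hp₁p, hp₁⟩ := exists_lt_forall_le_extProb hd hp0 hp1 hrp hfix hx0 hxr
  have htendsto := tendsto_extProb hd hp0 hp1 hr0 hrp hfix
  obtain ⟨k₀, hk₀⟩ :=
    Filter.eventually_atTop.1 (htendsto.eventually_lt_const (show r < r + η by linarith))
  refine ⟨p₁, hp₁0, hp₁p, k₀, fun k hk => ?_⟩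
  have hupper := hk₀ k hk
  have hlower := le_extProb (d := d) hp0.le hp1 hrp hfix.ge k
  have hmono := extProb_mono hp₁0.le hp₁p.le hp1 d k
  have hlower₁ := hp₁ k
  simp only [abs_lt]
  refine ⟨⟨?_, ?_⟩, ?_, ?_⟩ <;> linarith

end Limit

/-! ### The 2-core and extendable darts -/

section TwoCore

variable {W : Type} {H K : SimpleGraph W} {c : H.ConnectedComponent}

lemma twoCoreComp_le : twoCoreComp H c ≤ H := sSup_le fun _ hK => hK.1

lemma two_le_ncard_twoCoreComp [Finite W] {v : W} (hv : v ∈ (twoCoreComp H c).support) :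
    2 ≤ ((twoCoreComp H c).neighborSet v).ncard := by
  obtain ⟨w, hw⟩ := hv
  obtain ⟨K, hK, hKw⟩ := SimpleGraph.sSup_adj.1 hw
  refine (hK.2.2 v ⟨w, hKw⟩).trans (Set.ncard_le_ncard (fun x hx => ?_) (Set.toFinite _))
  exact SimpleGraph.sSup_adj.2 ⟨K, hK, hx⟩

lemma le_twoCoreComp (hKH : K ≤ H) (hc : ∀ v ∈ K.support, H.connectedComponentMk v = c)
    (hdeg : ∀ v ∈ K.support, 2 ≤ (K.neighborSet v).ncard) : K ≤ twoCoreComp H c :=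
  le_sSup ⟨hKH, hc, hdeg⟩

lemma twoCoreComp_adj_of_not_isBridge {v z : W} (h : H.Adj v z)
    (hv : H.connectedComponentMk v = c) (hb : ¬ H.IsBridge s(v, z)) :
    (twoCoreComp H c).Adj v z := by
  rw [SimpleGraph.isBridge_iff_forall_cycle_notMem (by simpa using h)] at hb
  push Not at hb
  obtain ⟨u, p, hp, hmem⟩ := hb
  set K := p.toSubgraph.spanningCoe with hK
  have hadj : K.Adj v z := by
    rw [hK, SimpleGraph.Subgraph.spanningCoe_adj, ← SimpleGraph.Subgraph.mem_edgeSet]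
    exact (SimpleGraph.Walk.mem_edges_toSubgraph p).2 hmem
  have hsupp : ∀ w ∈ K.support, w ∈ p.support := by
    rintro w ⟨x, hx⟩
    exact (SimpleGraph.Walk.mem_verts_toSubgraph p).1 (p.toSubgraph.edge_vert hx)
  refine le_twoCoreComp (K := K) (SimpleGraph.Subgraph.spanningCoe_le _) (fun w hw => ?_)
    (fun w hw => ?_) hadj
  · have hreach : ∀ w ∈ K.support, H.Reachable u w := fun w hw => ⟨p.takeUntil w (hsupp w hw)⟩
    rw [← hv]
    exact SimpleGraph.ConnectedComponent.eq.2 ((hreach w hw).symm.trans (hreach v ⟨z, hadj⟩))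
  · exact (hp.ncard_neighborSet_toSubgraph_eq_two (hsupp w hw)).ge

end TwoCore

section CoreCount

variable {W : Type} [Fintype W] {G K : SimpleGraph W} {s : Finset (Sym2 W)} {k : ℕ} {B : Finset W}

lemma sum_ncard_neighborSet (K : SimpleGraph W) :
    ∑ v, (K.neighborSet v).ncard = 2 * K.edgeSet.ncard := by
  have h := K.sum_degrees_eq_twice_card_edges
  rw [← SimpleGraph.coe_edgeFinset, Set.ncard_coe_finset, ← h]
  refine Finset.sum_congr rfl fun v _ => ?_
  rw [← SimpleGraph.card_neighborFinset_eq_degree, ← Set.ncard_coe_finset,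
    SimpleGraph.coe_neighborFinset]

lemma ncard_support_eq_sum (K : SimpleGraph W) :
    (K.support.ncard : ℝ) = ∑ v, if v ∈ K.support then 1 else 0 := by
  rw [Finset.sum_boole, ← Set.ncard_coe_finset]
  simp

lemma ncard_neighborSet_le_extCount (hK : K ≤ keep G s)
    (hdeg : ∀ v ∈ K.support, 2 ≤ (K.neighborSet v).ncard) (k : ℕ) (v : W) :
    (K.neighborSet v).ncard ≤ extCount G k v s := by
  rw [extCount, ← Set.ncard_coe_finset]
  refine Set.ncard_le_ncard (fun z hz => ?_) (Set.toFinite _)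
  have hz' : Extendable (keep G s) k v z := (Extendable.of_two_le_ncard hdeg k hz).mono hK
  exact Finset.mem_coe.2 (Finset.mem_filter.2 ⟨(G.mem_neighborFinset v z).2 (hK hz).1, hz'⟩)

lemma ncard_support_le_stat (hK : K ≤ keep G s)
    (hdeg : ∀ v ∈ K.support, 2 ≤ (K.neighborSet v).ncard) (k : ℕ) :
    (K.support.ncard : ℝ) ≤ stat G k (fun j => if 2 ≤ j then 1 else 0) s := by
  rw [ncard_support_eq_sum, stat]
  refine Finset.sum_le_sum fun v _ => ?_
  by_cases hv : v ∈ K.support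
  · rw [if_pos hv, if_pos ((hdeg v hv).trans (ncard_neighborSet_le_extCount hK hdeg k v))]
  · rw [if_neg hv]
    split_ifs <;> norm_num

lemma two_mul_ncard_edgeSet_le_stat (hK : K ≤ keep G s)
    (hdeg : ∀ v ∈ K.support, 2 ≤ (K.neighborSet v).ncard) (k : ℕ) :
    2 * (K.edgeSet.ncard : ℝ) ≤ stat G k (fun j => if 2 ≤ j then (j : ℝ) else 0) s := by
  have h : (2 : ℝ) * K.edgeSet.ncard = ∑ v, ((K.neighborSet v).ncard : ℝ) := by
    exact_mod_cast (sum_ncard_neighborSet K).symm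
  rw [h, stat]
  refine Finset.sum_le_sum fun v _ => ?_
  have hle := ncard_neighborSet_le_extCount hK hdeg k v
  by_cases hv : v ∈ K.support
  · rw [if_pos ((hdeg v hv).trans hle)]
    exact_mod_cast hle
  · have : K.neighborSet v = ∅ := Set.eq_empty_of_forall_notMem fun z hz => hv ⟨z, hz⟩
    rw [this, Set.ncard_empty]
    split_ifs <;> simp

lemma stat_le_ncard_support_add
    (hB : ∀ v ∉ B, 2 ≤ extCount G k v s → ∀ z, Extendable (keep G s) k v z → K.Adj v z) :
    stat G k (fun j => if 2 ≤ j then 1 else 0) s ≤ K.support.ncard + B.card := by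
  have hBsum : (B.card : ℝ) = ∑ v, if v ∈ B then 1 else 0 := by simp
  rw [ncard_support_eq_sum, hBsum, ← Finset.sum_add_distrib, stat]
  refine Finset.sum_le_sum fun v _ => ?_
  by_cases hv : v ∈ B
  · rw [if_pos hv]
    split_ifs <;> norm_num
  · rw [if_neg hv, add_zero]
    by_cases h2 : 2 ≤ extCount G k v s
    · obtain ⟨z, hz⟩ := Finset.card_pos.1 (zero_lt_two.trans_le h2)
      rw [if_pos h2, if_pos ⟨z, hB v hv h2 z (Finset.mem_filter.1 hz).2⟩]
    · rw [if_neg h2]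
      split_ifs <;> norm_num

lemma stat_le_two_mul_ncard_edgeSet_add {d : ℕ} (hd : ∀ v, G.degree v ≤ d)
    (hB : ∀ v ∉ B, 2 ≤ extCount G k v s → ∀ z, Extendable (keep G s) k v z → K.Adj v z) :
    stat G k (fun j => if 2 ≤ j then (j : ℝ) else 0) s ≤
      2 * K.edgeSet.ncard + d * B.card := by
  have h : (2 : ℝ) * K.edgeSet.ncard = ∑ v, ((K.neighborSet v).ncard : ℝ) := by
    exact_mod_cast (sum_ncard_neighborSet K).symm
  have hBsum : (d * B.card : ℝ) = ∑ v, if v ∈ B then (d : ℝ) else 0 := by simp [mul_comm]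
  rw [h, hBsum, ← Finset.sum_add_distrib, stat]
  refine Finset.sum_le_sum fun v _ => ?_
  by_cases h2 : 2 ≤ extCount G k v s
  · rw [if_pos h2]
    by_cases hv : v ∈ B
    · rw [if_pos hv]
      have : (extCount G k v s : ℝ) ≤ d := by exact_mod_cast extCount_le hd k v s
      have : (0 : ℝ) ≤ (K.neighborSet v).ncard := by positivity
      linarith
    · rw [if_neg hv, add_zero, extCount, ← Set.ncard_coe_finset]
      exact_mod_cast Set.ncard_le_ncard
        (fun z hz => hB v hv h2 z (Finset.mem_filter.1 (Finset.mem_coe.1 hz)).2) (Set.toFinite _)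
  · rw [if_neg h2]
    have : (0 : ℝ) ≤ (K.neighborSet v).ncard := by positivity
    split_ifs <;> positivity

end CoreCount

/-! ### Cuts of expanders -/

/-- The edges of `G` joining `S` to its complement; their number is `cutCard G S`. -/
def cutEdges {W : Type} [Fintype W] (G : SimpleGraph W) (S : Finset W) : Finset (Sym2 W) :=
  (edgeFinset' G).filter fun e => ∃ x ∈ S, ∃ y, y ∉ S ∧ e = s(x, y)

section Cut

variable {W : Type} [Fintype W] {G : SimpleGraph W} {b : ℝ} {d : ℕ} {S : Finset W}

lemma mem_cutEdges {e : Sym2 W} :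
    e ∈ cutEdges G S ↔ ∃ x y, G.Adj x y ∧ x ∈ S ∧ y ∉ S ∧ e = s(x, y) := by
  simp only [cutEdges, Finset.mem_filter, mem_edgeFinset']
  constructor
  · rintro ⟨he, x, hx, y, hy, rfl⟩
    exact ⟨x, y, he, hx, hy, rfl⟩
  · rintro ⟨x, y, h, hx, hy, rfl⟩
    exact ⟨h, x, hx, y, hy, rfl⟩

lemma cutEdges_subset (G : SimpleGraph W) (S : Finset W) : cutEdges G S ⊆ edgeFinset' G :=
  Finset.filter_subset _ _

lemma cutEdges_compl (S : Finset W) : cutEdges G Sᶜ = cutEdges G S := by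
  ext e
  simp only [mem_cutEdges, Finset.mem_compl, not_not]
  constructor <;>
  · rintro ⟨x, y, h, hx, hy, rfl⟩
    exact ⟨y, x, h.symm, hy, hx, Sym2.eq_swap⟩

lemma mk_mem_cutEdges_iff {x y : W} (h : G.Adj x y) :
    s(x, y) ∈ cutEdges G S ↔ ¬(x ∈ S ↔ y ∈ S) := by
  rw [mem_cutEdges]
  constructor
  · rintro ⟨a, b, -, ha, hb, he⟩
    rcases Sym2.eq_iff.1 he with ⟨rfl, rfl⟩ | ⟨rfl, rfl⟩ <;> tauto
  · intro hne
    by_cases hx : x ∈ S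
    · exact ⟨x, y, h, hx, by tauto, rfl⟩
    · exact ⟨y, x, h.symm, by tauto, hx, Sym2.eq_swap⟩

lemma degree_eq_ncard_neighborSet (G : SimpleGraph W) (v : W) :
    G.degree v = (G.neighborSet v).ncard := by
  rw [Set.ncard_eq_toFinset_card', ← SimpleGraph.neighborFinset, G.card_neighborFinset_eq_degree]

lemma IsExpander.degree_le (hG : IsExpander G b d) (v : W) : G.degree v ≤ d :=
  (degree_eq_ncard_neighborSet G v).trans_le (hG.1 v)

lemma IsExpander.le_card_cutEdges (hG : IsExpander G b d) (hb : 0 ≤ b) {m : ℝ}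
    (hS : m ≤ S.card) (hS' : m ≤ Sᶜ.card) : b * m ≤ (cutEdges G S).card := by
  have hsum : (S.card : ℝ) + Sᶜ.card = Fintype.card W := by
    exact_mod_cast Finset.card_add_card_compl S
  rcases le_total (S.card : ℝ) (Fintype.card W / 2) with h | h
  · exact (mul_le_mul_of_nonneg_left hS hb).trans (hG.2 S h)
  · rw [← cutEdges_compl]
    exact (mul_le_mul_of_nonneg_left hS' hb).trans (hG.2 Sᶜ (by linarith))

lemma card_le_mul_card_of_forall_exists_mem (hd : ∀ v, G.degree v ≤ d) {F : Finset (Sym2 W)}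
    (hF : F ⊆ edgeFinset' G) {D : Finset W} (h : ∀ e ∈ F, ∃ v ∈ D, v ∈ e) :
    F.card ≤ d * D.card := by
  have hsub : F ⊆ D.biUnion fun v => (G.neighborFinset v).image fun w => s(v, w) := by
    intro e he
    obtain ⟨v, hv, w, rfl⟩ := h e he
    exact Finset.mem_biUnion.2 ⟨v, hv, Finset.mem_image.2
      ⟨w, (G.mem_neighborFinset v w).2 (mem_edgeFinset'.1 (hF he)), rfl⟩⟩
  refine (Finset.card_le_card hsub).trans ?_
  refine (Finset.card_biUnion_le_card_mul _ _ d fun v _ => ?_).trans_eq (mul_comm _ _)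
  exact Finset.card_image_le.trans (hd v)

/-- Every cut separating `A₀` from `B₀` has an edge in `P`. -/
def MeetsCuts (G : SimpleGraph W) (A₀ B₀ : Finset W) (P : Finset (Sym2 W)) : Prop :=
  ∀ A, A₀ ⊆ A → Disjoint A B₀ → ∃ e ∈ P, e ∈ cutEdges G A

/-- The vertices lying on the same side as `A₀` of every cut that avoids some set of at most `i`
edges in `E`. For edges of `G`, these are the vertices at distance at most `i` from `A₀` in the
graph with edge set `E`. -/
def reach (G : SimpleGraph W) (A₀ : Finset W) (E : Finset (Sym2 W)) (i : ℕ) : Finset W :=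
  Finset.univ.filter fun v => ∃ P ⊆ E, P.card ≤ i ∧
    ∀ A, A₀ ⊆ A → Disjoint P (cutEdges G A) → v ∈ A

variable {A₀ B₀ : Finset W} {E U : Finset (Sym2 W)} {i : ℕ} {a : ℝ}

lemma mem_reach {v : W} : v ∈ reach G A₀ E i ↔ ∃ P ⊆ E, P.card ≤ i ∧
    ∀ A, A₀ ⊆ A → Disjoint P (cutEdges G A) → v ∈ A := by
  simp [reach]

lemma subset_reach : A₀ ⊆ reach G A₀ E i := fun _ hv =>
  mem_reach.2 ⟨∅, by simp, by simp, fun _ hA _ => hA hv⟩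

lemma reach_subset_succ : reach G A₀ E i ⊆ reach G A₀ E (i + 1) := fun v hv =>
  let ⟨P, hPE, hPi, hP⟩ := mem_reach.1 hv
  mem_reach.2 ⟨P, hPE, by omega, hP⟩

lemma mem_reach_succ_of_adj {x y : W} (hx : x ∈ reach G A₀ E i) (hxy : G.Adj x y)
    (hE : s(x, y) ∈ E) : y ∈ reach G A₀ E (i + 1) := by
  obtain ⟨P, hPE, hPi, hP⟩ := mem_reach.1 hx
  refine mem_reach.2 ⟨insert s(x, y) P, Finset.insert_subset hE hPE,
    (Finset.card_insert_le _ _).trans (by omega), fun A hA hcut => ?_⟩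
  rw [Finset.disjoint_insert_left, mk_mem_cutEdges_iff hxy, not_not] at hcut
  exact hcut.1.1 (hP A hA hcut.2)

lemma exists_meetsCuts_of_not_disjoint_reach (h : ¬Disjoint (reach G A₀ E i) B₀) :
    ∃ P ⊆ E, P.card ≤ i ∧ MeetsCuts G A₀ B₀ P := by
  obtain ⟨v, hv, hvB⟩ := Finset.not_disjoint_iff.1 h
  obtain ⟨P, hPE, hPi, hP⟩ := mem_reach.1 hv
  exact ⟨P, hPE, hPi, fun A hA hAB => Finset.not_disjoint_iff.1 fun hcut =>
    Finset.disjoint_left.1 hAB (hP A hA hcut) hvB⟩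

lemma card_cutEdges_reach_le (hd : ∀ v, G.degree v ≤ d) :
    ((cutEdges G (reach G A₀ (edgeFinset' G \ U) i)).card : ℝ) ≤
      U.card + d * ((reach G A₀ (edgeFinset' G \ U) (i + 1)).card -
        (reach G A₀ (edgeFinset' G \ U) i).card) := by
  set T := reach G A₀ (edgeFinset' G \ U) with hT
  have hnew : (cutEdges G (T i) \ U).card ≤ d * (T (i + 1) \ T i).card := by
    refine card_le_mul_card_of_forall_exists_mem hd
      (Finset.sdiff_subset.trans (cutEdges_subset G _)) fun e he => ?_
    obtain ⟨he, heU⟩ := Finset.mem_sdiff.1 he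
    obtain ⟨x, y, hxy, hx, hy, rfl⟩ := mem_cutEdges.1 he
    have hE := Finset.mem_sdiff.2 ⟨mem_edgeFinset'.2 hxy, heU⟩
    exact ⟨y, Finset.mem_sdiff.2 ⟨mem_reach_succ_of_adj hx hxy hE, hy⟩, Sym2.mem_mk_right x y⟩
  rw [← Finset.cast_card_sdiff reach_subset_succ, ← hT, add_comm]
  exact_mod_cast Finset.card_le_card_sdiff_add_card.trans (Nat.add_le_add_right hnew _)

lemma IsExpander.not_disjoint_reach [Nonempty W] (hG : IsExpander G b d) (hb : 0 ≤ b) {L : ℕ}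
    (hL : 2 * d < L * (b * a)) (hA : a * Fintype.card W ≤ A₀.card)
    (hB : a * Fintype.card W ≤ B₀.card) (hU : (U.card : ℝ) ≤ b * a * Fintype.card W / 2) :
    ¬Disjoint (reach G A₀ (edgeFinset' G \ U) L) B₀ := by
  intro hdisj
  set T := reach G A₀ (edgeFinset' G \ U)
  have hmono : Monotone T := monotone_nat_of_le_succ fun _ => reach_subset_succ
  have hgrow : ∀ i ≤ L, b * a * Fintype.card W / 2 ≤ d * ((T (i + 1)).card - (T i).card) := by
    intro i hi
    have hBT : B₀ ⊆ (T i)ᶜ :=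
      Finset.subset_compl_iff_disjoint_left.2 (hdisj.mono_left (hmono hi))
    have hAT : A₀ ⊆ T i := subset_reach
    have hcut := hG.le_card_cutEdges hb
      (hA.trans (by exact_mod_cast Finset.card_le_card hAT))
      (hB.trans (by exact_mod_cast Finset.card_le_card hBT))
    linarith [card_cutEdges_reach_le hG.degree_le (A₀ := A₀) (U := U) (i := i)]
  have hsum : ∀ i ≤ L, i * (b * a * Fintype.card W / 2) ≤ d * (T i).card := by
    intro i
    induction i with
    | zero => intro _; simp only [Nat.cast_zero, zero_mul]; positivity
    | succ i ih =>
      intro hi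
      have hstep := hgrow i (by omega)
      push_cast
      linarith [ih (by omega)]
  have hcard : (d : ℝ) * (T L).card ≤ d * Fintype.card W := by
    gcongr
    exact Finset.card_le_univ _
  have hn : (0 : ℝ) < Fintype.card W := by exact_mod_cast Fintype.card_pos
  linarith [hsum L le_rfl, mul_lt_mul_of_pos_right hL hn]

lemma exists_pairwiseDisjoint_of_forall_exists_disjoint {α : Type*} [Finite α]
    {Q : Finset α → Prop} {L : ℕ} {u : ℝ}
    (h : ∀ U : Finset α, U.card ≤ u → ∃ P, (Q P ∧ P.card ≤ L) ∧ P.Nonempty ∧ Disjoint P U) :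
    ∃ F : Finset (Finset α), (∀ P ∈ F, Q P ∧ P.card ≤ L) ∧
      (F : Set (Finset α)).PairwiseDisjoint id ∧ u < L * F.card := by
  obtain ⟨F, -, ⟨hF, hdisj⟩, hmax⟩ := Finite.exists_le_maximal
    (p := fun F : Finset (Finset α) => (∀ P ∈ F, Q P ∧ P.card ≤ L) ∧
      (F : Set (Finset α)).PairwiseDisjoint id) (a := ∅) (by simp)
  refine ⟨F, hF, hdisj, lt_of_not_ge fun hle => ?_⟩
  have hcard : (F.biUnion id).card ≤ L * F.card :=
    (Finset.card_biUnion_le_card_mul F id L fun P hP => (hF P hP).2).trans_eq (mul_comm _ _)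
  obtain ⟨P, hP, ⟨x, hx⟩, hPF⟩ := h (F.biUnion id) (le_trans (by exact_mod_cast hcard) hle)
  rw [Finset.disjoint_biUnion_right] at hPF
  have hins : insert P F ≤ F := hmax ⟨by simpa using ⟨hP, hF⟩, by
    rw [Finset.coe_insert]
    exact hdisj.insert fun R hR _ => hPF R hR⟩ (Finset.subset_insert P F)
  exact Finset.disjoint_left.1 (hPF P (hins (Finset.mem_insert_self P F))) hx hx

/-- Any small set of edges can be avoided by short chains of edges joining `A₀` to `B₀`, so a
linear number of such chains can be chosen greedily. -/
lemma IsExpander.exists_pairwiseDisjoint_meetsCuts [Nonempty W] (hG : IsExpander G b d)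
    (hb : 0 ≤ b) {L : ℕ} (hL : 2 * d < L * (b * a)) (hAB : Disjoint A₀ B₀)
    (hA : a * Fintype.card W ≤ A₀.card) (hB : a * Fintype.card W ≤ B₀.card) :
    ∃ F : Finset (Finset (Sym2 W)),
      (∀ P ∈ F, (P ⊆ edgeFinset' G ∧ MeetsCuts G A₀ B₀ P) ∧ P.card ≤ L) ∧
      (F : Set (Finset (Sym2 W))).PairwiseDisjoint id ∧
      b * a / (2 * L) * Fintype.card W ≤ F.card := by
  have hL0 : (0 : ℝ) < L := by
    rcases (Nat.cast_nonneg (α := ℝ) L).eq_or_lt with h | h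
    · rw [← h, zero_mul] at hL
      exact absurd hL (not_lt.2 (by positivity))
    · exact h
  obtain ⟨F, hF, hdisj, hcard⟩ := exists_pairwiseDisjoint_of_forall_exists_disjoint (L := L)
    (Q := fun P => P ⊆ edgeFinset' G ∧ MeetsCuts G A₀ B₀ P)
    (u := b * a * Fintype.card W / 2) fun U hU => by
      obtain ⟨P, hPE, hPL, hP⟩ :=
        exists_meetsCuts_of_not_disjoint_reach (hG.not_disjoint_reach hb hL hA hB hU)
      obtain ⟨e, he, -⟩ := hP A₀ subset_rfl hAB
      exact ⟨P, ⟨⟨hPE.trans Finset.sdiff_subset, hP⟩, hPL⟩, ⟨e, he⟩,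
        Finset.sdiff_disjoint.mono_left hPE⟩
  refine ⟨F, hF, hdisj, ?_⟩
  calc b * a / (2 * L) * Fintype.card W = b * a * Fintype.card W / 2 / L := by ring
    _ ≤ F.card := (div_le_iff₀' hL0).2 hcard.le

end Cut

/-! ### Sprinkling -/

/-- The vertices lying in components of `H` with at least `R` vertices. -/
def bigVerts {W : Type} [Fintype W] (H : SimpleGraph W) (R : ℕ) : Finset W :=
  Finset.univ.filter fun v => R ≤ (compVerts H (H.connectedComponentMk v)).card

/-- Some cut of `H` separating `A₀` from `B₀` has at most `m` edges. -/
def HasSparseCut {W : Type} [Fintype W] (H : SimpleGraph W) (m : ℝ) (A₀ B₀ : Finset W) : Prop :=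
  ∃ A, A₀ ⊆ A ∧ Disjoint A B₀ ∧ ((cutEdges H A).card : ℝ) ≤ m

/-- Every vertex set whose cut in `H` has at most `m` edges contains all but fewer than `a`, or
fewer than `a`, of the vertices in `X`. -/
def Unsplit {W : Type} [Fintype W] (H : SimpleGraph W) (X : Finset W) (m a : ℝ) : Prop :=
  ∀ A : Finset W, ((cutEdges H A).card : ℝ) ≤ m → ((A ∩ X).card : ℝ) < a ∨ ((X \ A).card : ℝ) < a

lemma iff_of_reachable {W : Type*} {H : SimpleGraph W} {P : W → Prop}
    (hP : ∀ x y, H.Adj x y → (P x ↔ P y)) {x y : W} (hxy : H.Reachable x y) : P x ↔ P y := by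
  obtain ⟨w⟩ := hxy
  induction w with
  | nil => rfl
  | cons h _ ih => exact (hP _ _ h).trans ih

section SparseCuts

variable {W : Type} [Fintype W] {G H : SimpleGraph W} {R : ℕ}

lemma mem_bigVerts_of_reachable {x y : W} (h : H.Reachable x y) (hx : x ∈ bigVerts H R) :
    y ∈ bigVerts H R := by
  simp only [bigVerts, Finset.mem_filter, Finset.mem_univ, true_and] at hx ⊢
  rwa [← SimpleGraph.ConnectedComponent.eq.2 h]

lemma cutEdges_mono (h : G ≤ H) (A : Finset W) : cutEdges G A ⊆ cutEdges H A := by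
  intro e he
  obtain ⟨x, y, hxy, hx, hy, rfl⟩ := mem_cutEdges.1 he
  exact mem_cutEdges.2 ⟨x, y, h hxy, hx, hy, rfl⟩

lemma cutEdges_inter_bigVerts_subset (A : Finset W) :
    cutEdges H (A ∩ bigVerts H R) ⊆ cutEdges H A := by
  intro e he
  obtain ⟨x, y, h, hx, hy, rfl⟩ := mem_cutEdges.1 he
  rw [Finset.mem_inter] at hx hy
  have hyR := mem_bigVerts_of_reachable h.reachable hx.2
  exact mem_cutEdges.2 ⟨x, y, h, hx.1, fun hyA => hy ⟨hyA, hyR⟩, rfl⟩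

lemma mul_card_image_bigVerts_le (H : SimpleGraph W) (R : ℕ) :
    R * ((bigVerts H R).image H.connectedComponentMk).card ≤ Fintype.card W := by
  refine (Finset.mul_card_image_le_card (s := bigVerts H R) (f := H.connectedComponentMk) R
    fun c hc => ?_).trans (Finset.card_le_univ _)
  obtain ⟨v, hv, rfl⟩ := Finset.mem_image.1 hc
  refine (Finset.mem_filter.1 hv).2.trans (Finset.card_le_card fun w hw => ?_)
  have hwv := (Finset.mem_filter.1 hw).2
  exact Finset.mem_filter.2
    ⟨mem_bigVerts_of_reachable (SimpleGraph.ConnectedComponent.eq.1 hwv).symm hv, hwv⟩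

/-- A union of parts of components is determined by its cut and by the component representatives
it contains. -/
lemma eq_of_cutEdges_eq {A A' : Finset W} (hA : A ⊆ bigVerts H R) (hA' : A' ⊆ bigVerts H R)
    (hcut : cutEdges H A = cutEdges H A')
    (hrep : ((bigVerts H R).image H.connectedComponentMk).filter (fun c => c.out ∈ A) =
      ((bigVerts H R).image H.connectedComponentMk).filter fun c => c.out ∈ A') : A = A' := by
  have hadj : ∀ x y, H.Adj x y → ((x ∈ A ↔ x ∈ A') ↔ (y ∈ A ↔ y ∈ A')) := by
    intro x y h
    have hedge := mk_mem_cutEdges_iff (S := A) h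
    rw [hcut, mk_mem_cutEdges_iff h] at hedge
    tauto
  have hmem : ∀ v ∈ bigVerts H R, v ∈ A ↔ v ∈ A' := by
    intro v hv
    have hout : H.connectedComponentMk (H.connectedComponentMk v).out = _ :=
      Quot.out_eq (H.connectedComponentMk v)
    rw [← iff_of_reachable hadj (SimpleGraph.ConnectedComponent.eq.1 hout)]
    simpa [Finset.mem_image_of_mem _ hv] using
      Finset.ext_iff.1 hrep (H.connectedComponentMk v)
  ext v
  exact ⟨fun h => (hmem v (hA h)).1 h, fun h => (hmem v (hA' h)).2 h⟩

lemma card_powerset_filter_card_le {α : Type*} (E : Finset α) {x m : ℝ} (hx0 : 0 < x)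
    (hx1 : x ≤ 1) :
    ((E.powerset.filter fun F => (F.card : ℝ) ≤ m).card : ℝ) ≤
      Real.exp (-m * Real.log x + x * E.card) := by
  have hmarkov : ((E.powerset.filter fun F => (F.card : ℝ) ≤ m).card : ℝ) *
      Real.exp (m * Real.log x) ≤ ∑ F ∈ E.powerset, x ^ F.card := by
    rw [← nsmul_eq_mul]
    refine (Finset.card_nsmul_le_sum _ (fun F => x ^ F.card) _ fun F hF => ?_).trans
      (Finset.sum_le_sum_of_subset_of_nonneg (Finset.filter_subset _ _) fun _ _ _ => by positivity)
    rw [← Real.exp_log (pow_pos hx0 F.card), Real.log_pow]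
    exact Real.exp_le_exp.2 (mul_le_mul_of_nonpos_right (Finset.mem_filter.1 hF).2
      (Real.log_nonpos hx0.le hx1))
  have hsum : ∑ F ∈ E.powerset, x ^ F.card ≤ Real.exp (x * E.card) := by
    have hprod := Finset.prod_add (fun _ => x) (fun _ => 1) E
    simp only [Finset.prod_const, one_pow, mul_one] at hprod
    rw [← hprod, mul_comm x, Real.exp_nat_mul]
    exact pow_le_pow_left₀ (by linarith) (Real.add_one_le_exp x) _
  rw [Real.exp_add, neg_mul, Real.exp_neg, inv_mul_eq_div, le_div_iff₀ (Real.exp_pos _)]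
  exact hmarkov.trans hsum

lemma two_pow_card_image_bigVerts_le (hR : 0 < R) :
    (2 : ℝ) ^ ((bigVerts H R).image H.connectedComponentMk).card ≤
      Real.exp (Real.log 2 / R * Fintype.card W) := by
  have hcard : (R : ℝ) * ((bigVerts H R).image H.connectedComponentMk).card ≤ Fintype.card W := by
    exact_mod_cast mul_card_image_bigVerts_le H R
  rw [← le_div_iff₀' (by exact_mod_cast hR)] at hcard
  rw [← Real.exp_log (pow_pos two_pos _), Real.log_pow, div_mul_eq_mul_div, mul_comm, mul_div_assoc]
  gcongr

lemma card_sparse_cuts_le (hR : 0 < R) {x m : ℝ} (hx0 : 0 < x) (hx1 : x ≤ 1) :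
    (((bigVerts H R).powerset.filter fun A => ((cutEdges H A).card : ℝ) ≤ m).card : ℝ) ≤
      Real.exp (-m * Real.log x + x * (edgeFinset' H).card) *
        Real.exp (Real.log 2 / R * Fintype.card W) := by
  set C := (bigVerts H R).image H.connectedComponentMk
  have hcard : ((bigVerts H R).powerset.filter fun A => ((cutEdges H A).card : ℝ) ≤ m).card ≤
      (((edgeFinset' H).powerset.filter fun F => (F.card : ℝ) ≤ m) ×ˢ C.powerset).card := by
    refine Finset.card_le_card_of_injOn
      (fun A => (cutEdges H A, C.filter fun c => c.out ∈ A)) (fun A hA => ?_)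
      fun A hA A' hA' h => ?_
    · exact Finset.mem_coe.2 (Finset.mem_product.2
        ⟨Finset.mem_filter.2 ⟨Finset.mem_powerset.2 (cutEdges_subset _ _),
          (Finset.mem_filter.1 (Finset.mem_coe.1 hA)).2⟩,
          Finset.mem_powerset.2 (Finset.filter_subset _ _)⟩)
    · obtain ⟨hcut, hrep⟩ := Prod.mk.inj h
      exact eq_of_cutEdges_eq
        (Finset.mem_powerset.1 (Finset.mem_filter.1 (Finset.mem_coe.1 hA)).1)
        (Finset.mem_powerset.1 (Finset.mem_filter.1 (Finset.mem_coe.1 hA')).1) hcut hrep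
  rw [Finset.card_product, Finset.card_powerset] at hcard
  refine (Nat.cast_le.2 hcard).trans ?_
  push_cast
  exact mul_le_mul (card_powerset_filter_card_le _ hx0 hx1) (two_pow_card_image_bigVerts_le hR)
    (by positivity) (by positivity)

end SparseCuts

section Sprinkling

variable {W : Type} [Fintype W] {G : SimpleGraph W} {R L d : ℕ} {b p ε δ x m : ℝ}
  {s t : Finset (Sym2 W)} {A₀ B₀ : Finset W}

lemma card_filter_subset_le_card_cutEdges {F : Finset (Finset (Sym2 W))}
    (hF : ∀ P ∈ F, MeetsCuts G A₀ B₀ P) (hdisj : (F : Set (Finset (Sym2 W))).PairwiseDisjoint id)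
    {A : Finset W} (hA : A₀ ⊆ A) (hAB : Disjoint A B₀) (hst : t ⊆ s) :
    (F.filter (· ⊆ t)).card ≤ (cutEdges (keep G s) A).card := by
  have hex : ∀ P : F.filter (· ⊆ t), ∃ e ∈ P.1, e ∈ cutEdges (keep G s) A := by
    rintro ⟨P, hP⟩
    obtain ⟨hPF, hPt⟩ := Finset.mem_filter.1 hP
    obtain ⟨e, heP, he⟩ := hF P hPF A hA hAB
    obtain ⟨x, y, hxy, hx, hy, rfl⟩ := mem_cutEdges.1 he
    exact ⟨_, heP, mem_cutEdges.2 ⟨x, y, ⟨hxy, hst (hPt heP)⟩, hx, hy, rfl⟩⟩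
  choose f hf hfc using hex
  rw [← Finset.card_attach]
  refine Finset.card_le_card_of_injOn f (fun P _ => hfc P) fun P _ Q _ hPQ => ?_
  by_contra hne
  refine Finset.disjoint_left.1 (hdisj (Finset.mem_filter.1 P.2).1 (Finset.mem_filter.1 Q.2).1
    fun h => hne (Subtype.ext h)) (hf P) ?_
  rw [hPQ]
  exact hf Q

lemma prob_hasSparseCut_le [Nonempty W] (hG : IsExpander G b d) (hb : 0 ≤ b) (hp0 : 0 ≤ p)
    (hp1 : p ≤ 1) (hL : 2 * d < L * (b * ε)) (m : ℝ) (s : Finset (Sym2 W)) (hAB : Disjoint A₀ B₀)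
    (hA : ε * Fintype.card W ≤ A₀.card) (hB : ε * Fintype.card W ≤ B₀.card) :
    prob (edgeFinset' G) p (fun t => HasSparseCut (keep G (s ∪ t)) m A₀ B₀) ≤
      Real.exp (m * Real.log 2 +
        Real.log (1 - p ^ L / 2) * (b * ε / (2 * L) * Fintype.card W)) := by
  obtain ⟨F, hF, hdisj, hcard⟩ := hG.exists_pairwiseDisjoint_meetsCuts hb hL hAB hA hB
  have hpL : p ^ L ≤ 1 := pow_le_one₀ hp0 hp1
  have hpos : 0 < 1 - p ^ L / 2 := by linarith
  calc prob (edgeFinset' G) p (fun t => HasSparseCut (keep G (s ∪ t)) m A₀ B₀)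
      ≤ prob (edgeFinset' G) p (fun t => ((F.filter fun P => P ⊆ t).card : ℝ) ≤ m) := by
        refine prob_mono hp0 hp1 fun t _ ⟨A, hA, hAB, hcut⟩ => le_trans ?_ hcut
        exact_mod_cast card_filter_subset_le_card_cutEdges (fun P hP => (hF P hP).1.2) hdisj hA hAB
          Finset.subset_union_right
    _ ≤ (2 : ℝ) ^ m * (1 - p ^ L / 2) ^ F.card := by
        convert prob_card_filter_le_le hp0 hp1 F (A := fun P => (P : Set (Sym2 W)))
          (fun P hP Q hQ hne => Finset.disjoint_coe.2 (hdisj hP hQ hne))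
          (fun P _ => determinedBy_subset P) (fun P hP => ?_) m
        rw [prob_subset (hF P hP).1.1]
        exact pow_le_pow_of_le_one hp0 hp1 (hF P hP).2
    _ ≤ _ := by
        rw [Real.exp_add, Real.rpow_def_of_pos two_pos, mul_comm m,
          ← Real.exp_log (pow_pos hpos F.card), Real.log_pow, mul_comm (F.card : ℝ)]
        gcongr ?_ * Real.exp ?_
        exact mul_le_mul_of_nonpos_left hcard
          (Real.log_nonpos hpos.le (by linarith [pow_nonneg hp0 L]))

lemma exists_hasSparseCut_of_not_unsplit {a : ℝ}
    (h : ¬Unsplit (keep G (s ∪ t)) (bigVerts (keep G s) R) m a) :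
    ∃ A₀ ∈ (bigVerts (keep G s) R).powerset.filter fun A =>
        ((cutEdges (keep G s) A).card : ℝ) ≤ m,
      a ≤ A₀.card ∧ a ≤ (bigVerts (keep G s) R \ A₀).card ∧
      HasSparseCut (keep G (s ∪ t)) m A₀ (bigVerts (keep G s) R \ A₀) := by
  unfold Unsplit at h
  push Not at h
  obtain ⟨A, hcut, hA, hA'⟩ := h
  have hsub : cutEdges (keep G s) (A ∩ bigVerts (keep G s) R) ⊆ cutEdges (keep G (s ∪ t)) A :=
    (cutEdges_inter_bigVerts_subset A).trans (cutEdges_mono (keep_mono Finset.subset_union_left) A)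
  have hsdiff : bigVerts (keep G s) R \ (A ∩ bigVerts (keep G s) R) =
      bigVerts (keep G s) R \ A := by
    rw [Finset.inter_comm, Finset.sdiff_inter_self_left]
  refine ⟨_, Finset.mem_filter.2 ⟨Finset.mem_powerset.2 Finset.inter_subset_right,
    le_trans ?_ hcut⟩, hA, ?_, A, Finset.inter_subset_left, ?_, hcut⟩
  · exact_mod_cast Finset.card_le_card hsub
  · rwa [hsdiff]
  · rw [hsdiff]
    exact Finset.disjoint_sdiff

lemma card_edgeFinset'_keep_le (hd : ∀ v, G.degree v ≤ d) (s : Finset (Sym2 W)) :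
    (edgeFinset' (keep G s)).card ≤ d * Fintype.card W := by
  refine (Finset.card_le_card fun e he => ?_).trans (card_edgeFinset'_le hd)
  rw [mem_edgeFinset'] at he ⊢
  exact SimpleGraph.edgeSet_mono (keep_le s) he

lemma prob_not_unsplit_le [Nonempty W] (hG : IsExpander G b d) (hb : 0 ≤ b) (hp0 : 0 ≤ p)
    (hp1 : p ≤ 1) (hL : 2 * d < L * (b * ε)) (hx0 : 0 < x) (hx1 : x ≤ 1) (hR : 0 < R) (δ : ℝ)
    (s : Finset (Sym2 W)) :
    prob (edgeFinset' G) p (fun t => ¬Unsplit (keep G (s ∪ t)) (bigVerts (keep G s) R)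
        (δ * Fintype.card W) (ε * Fintype.card W)) ≤
      Real.exp ((-δ * Real.log x + x * d + Real.log 2 / R + δ * Real.log 2 +
        Real.log (1 - p ^ L / 2) * (b * ε / (2 * L))) * Fintype.card W) := by
  set n : ℝ := (Fintype.card W : ℝ) with hn
  set X := bigVerts (keep G s) R
  set 𝒜 := X.powerset.filter fun A => ((cutEdges (keep G s) A).card : ℝ) ≤ δ * n
  set 𝒜' := 𝒜.filter fun A => ε * n ≤ A.card ∧ ε * n ≤ (X \ A).card
  have hedges : ((edgeFinset' (keep G s)).card : ℝ) ≤ d * n := by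
    rw [hn]
    exact_mod_cast card_edgeFinset'_keep_le hG.degree_le s
  calc prob (edgeFinset' G) p (fun t => ¬Unsplit (keep G (s ∪ t)) X (δ * n) (ε * n))
      ≤ prob (edgeFinset' G) p
          (fun t => ∃ A ∈ 𝒜', HasSparseCut (keep G (s ∪ t)) (δ * n) A (X \ A)) :=
        prob_mono hp0 hp1 fun t _ h =>
          let ⟨A, hA, hA₁, hA₂, hcut⟩ := exists_hasSparseCut_of_not_unsplit h
          ⟨A, Finset.mem_filter.2 ⟨hA, hA₁, hA₂⟩, hcut⟩
    _ ≤ ∑ A ∈ 𝒜', prob (edgeFinset' G) p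
          (fun t => HasSparseCut (keep G (s ∪ t)) (δ * n) A (X \ A)) :=
        prob_exists_le_sum hp0 hp1 _ _
    _ ≤ 𝒜'.card • Real.exp (δ * n * Real.log 2 +
          Real.log (1 - p ^ L / 2) * (b * ε / (2 * L) * n)) :=
        Finset.sum_le_card_nsmul _ _ _ fun A hA => prob_hasSparseCut_le hG hb hp0 hp1 hL _ s
          Finset.disjoint_sdiff (Finset.mem_filter.1 hA).2.1 (Finset.mem_filter.1 hA).2.2
    _ ≤ Real.exp (-(δ * n) * Real.log x + x * (d * n)) * Real.exp (Real.log 2 / R * n) *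
          Real.exp (δ * n * Real.log 2 + Real.log (1 - p ^ L / 2) * (b * ε / (2 * L) * n)) := by
        rw [nsmul_eq_mul]
        gcongr
        refine (Nat.cast_le.2 (Finset.card_filter_le _ _)).trans
          ((card_sparse_cuts_le hR hx0 hx1).trans ?_)
        gcongr
    _ = _ := by
        rw [← Real.exp_add, ← Real.exp_add]
        congr 1
        ring

lemma exists_entropy_le (d : ℕ) {l : ℝ} (hl : 0 < l) :
    ∃ x, 0 < x ∧ x ≤ 1 ∧ ∃ δ > 0, ∃ R₀ > 0, ∀ R : ℕ, R₀ ≤ R →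
      -δ * Real.log x + x * d + Real.log 2 / R + δ * Real.log 2 ≤ 3 * l := by
  have hlog2 : 0 < Real.log 2 := Real.log_pos one_lt_two
  obtain ⟨x, hx0, hx⟩ : ∃ x, 0 < x ∧ x < min 1 (l / (d + 1)) :=
    exists_between (lt_min one_pos (by positivity))
  obtain ⟨hx1, hxl⟩ := lt_min_iff.1 hx
  rw [lt_div_iff₀ (by positivity)] at hxl
  have hlogx : Real.log x ≤ 0 := Real.log_nonpos hx0.le hx1.le
  have hlog : 0 < Real.log 2 - Real.log x := by linarith
  obtain ⟨R₀, hR₀⟩ := exists_nat_gt (Real.log 2 / l)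
  have hR₀0 : (0 : ℝ) < R₀ := (by positivity : (0 : ℝ) < Real.log 2 / l).trans hR₀
  refine ⟨x, hx0, hx1.le, l / (Real.log 2 - Real.log x), by positivity, R₀, by exact_mod_cast hR₀0,
    fun R hR => ?_⟩
  have hδ : l / (Real.log 2 - Real.log x) * (Real.log 2 - Real.log x) = l :=
    div_mul_cancel₀ l hlog.ne'
  have hRR₀ : (R₀ : ℝ) ≤ R := by exact_mod_cast hR
  have hRl : Real.log 2 / R ≤ l := by
    rw [div_lt_iff₀ hl] at hR₀
    rw [div_le_iff₀ (hR₀0.trans_le hRR₀)]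
    nlinarith
  linarith

lemma exists_prob_not_unsplit_le (hb : 0 < b) (d : ℕ) (hp0 : 0 < p) (hp1 : p ≤ 1) (hε : 0 < ε) :
    ∃ δ > 0, ∃ R₀, ∃ c > 0, ∀ R ≥ R₀, ∀ (W : Type) [Fintype W] [Nonempty W]
      (G : SimpleGraph W), IsExpander G b d → ∀ s,
        prob (edgeFinset' G) p (fun t => ¬Unsplit (keep G (s ∪ t)) (bigVerts (keep G s) R)
            (δ * Fintype.card W) (ε * Fintype.card W)) ≤
          Real.exp (-c * Fintype.card W) := by
  obtain ⟨L, hL⟩ := exists_nat_gt (2 * d / (b * ε))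
  have hL0 : (0 : ℝ) < L := lt_of_le_of_lt (by positivity) hL
  rw [div_lt_iff₀ (by positivity)] at hL
  have hpL : p ^ L ≤ 1 := pow_le_one₀ hp0.le hp1
  have hlog : Real.log (1 - p ^ L / 2) < 0 :=
    Real.log_neg (by linarith) (by linarith [pow_pos hp0 L])
  set l := -Real.log (1 - p ^ L / 2) * (b * ε / (2 * L))
  have hl0 : 0 < l := mul_pos (neg_pos.2 hlog) (by positivity)
  obtain ⟨x, hx0, hx1, δ, hδ, R₀, hR₀, hentropy⟩ :=
    exists_entropy_le d (show 0 < l / 4 by positivity)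
  refine ⟨δ, hδ, R₀, l / 4, by positivity, fun R hR W _ _ G hG s => ?_⟩
  refine (prob_not_unsplit_le hG hb.le hp0.le hp1 hL hx0 hx1 (hR₀.trans_le hR) δ s).trans ?_
  gcongr
  linarith [hentropy R hR]

end Sprinkling

/-! ### Sides of bridges -/

/-- The vertices of the component of `z` after removing the edge `vz`. -/
def side {W : Type} [Fintype W] (H : SimpleGraph W) (v z : W) : Finset W :=
  compVerts (H.deleteEdges {s(v, z)}) ((H.deleteEdges {s(v, z)}).connectedComponentMk z)

section Side

variable {W : Type} [Fintype W] {G H : SimpleGraph W} {v z x y : W} {k : ℕ}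

lemma mem_compVerts {c : H.ConnectedComponent} :
    x ∈ compVerts H c ↔ H.connectedComponentMk x = c := by
  simp [compVerts]

lemma mem_side : x ∈ side H v z ↔ (H.deleteEdges {s(v, z)}).Reachable x z := by
  rw [side, mem_compVerts, SimpleGraph.ConnectedComponent.eq]

lemma self_mem_side : z ∈ side H v z := mem_side.2 .rfl

lemma mem_side_iff_of_adj (h : H.Adj x y) (he : s(x, y) ≠ s(v, z)) :
    x ∈ side H v z ↔ y ∈ side H v z := by
  have h' : (H.deleteEdges {s(v, z)}).Adj x y := SimpleGraph.deleteEdges_adj.2 ⟨h, he⟩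
  rw [mem_side, mem_side]
  exact ⟨fun hx => h'.symm.reachable.trans hx, fun hy => h'.reachable.trans hy⟩

lemma card_cutEdges_side_le (H : SimpleGraph W) (v z : W) :
    (cutEdges H (side H v z)).card ≤ 1 := by
  refine (Finset.card_le_card (t := {s(v, z)}) fun e he => ?_).trans_eq (Finset.card_singleton _)
  obtain ⟨x, y, h, hx, hy, rfl⟩ := mem_cutEdges.1 he
  by_contra hne
  exact hy ((mem_side_iff_of_adj h (by simpa using hne)).1 hx)

lemma disjoint_side (hb : H.IsBridge s(v, z)) : Disjoint (side H v z) (side H z v) := by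
  rw [Finset.disjoint_left]
  intro x hx hx'
  rw [mem_side] at hx hx'
  rw [Sym2.eq_swap] at hx'
  exact SimpleGraph.isBridge_iff.1 hb (hx'.symm.trans hx)

lemma side_subset_compVerts (h : H.Adj v z) :
    side H v z ⊆ compVerts H (H.connectedComponentMk v) := by
  intro x hx
  rw [mem_compVerts, SimpleGraph.ConnectedComponent.eq]
  exact ((mem_side.1 hx).mono (SimpleGraph.deleteEdges_le _)).trans h.symm.reachable

lemma compVerts_subset_side_union_side :
    compVerts H (H.connectedComponentMk v) ⊆ side H v z ∪ side H z v := by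
  intro x hx
  rw [mem_compVerts, SimpleGraph.ConnectedComponent.eq] at hx
  refine (iff_of_reachable (P := (· ∈ side H v z ∪ side H z v)) (fun a b h => ?_) hx).2
    (Finset.mem_union_right _ self_mem_side)
  simp only [Finset.mem_union]
  by_cases he : s(a, b) = s(v, z)
  · rcases Sym2.eq_iff.1 he with ⟨rfl, rfl⟩ | ⟨rfl, rfl⟩ <;> simp [self_mem_side]
  · rw [mem_side_iff_of_adj h he, mem_side_iff_of_adj h (he <| ·.trans Sym2.eq_swap)]

/-- A set bounded by at most the edge `e` contains or avoids a side not containing `e`. -/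
lemma side_subset_or_disjoint {X : Finset W} {e : Sym2 W}
    (hX : ∀ x y, H.Adj x y → s(x, y) ≠ e → (x ∈ X ↔ y ∈ X)) {u : W} (hu : u ∈ e)
    (huS : u ∉ side H v z) : side H v z ⊆ X ∨ Disjoint (side H v z) X := by
  have hadj : ∀ x y, (H.deleteEdges {s(v, z)}).Adj x y →
      (x ∈ side H v z ∧ x ∈ X ↔ y ∈ side H v z ∧ y ∈ X) := by
    intro x y h
    obtain ⟨hxy, hne⟩ := SimpleGraph.deleteEdges_adj.1 h
    have hside := mem_side_iff_of_adj hxy hne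
    rw [← hside]
    refine and_congr_right fun hx => hX x y hxy ?_
    rintro rfl
    rcases Sym2.mem_iff.1 hu with rfl | rfl
    · exact huS hx
    · exact huS (hside.1 hx)
  have hz : ∀ x ∈ side H v z, x ∈ X ↔ z ∈ X := fun x hx => by
    simpa [hx, self_mem_side] using iff_of_reachable hadj (mem_side.1 hx)
  by_cases hzX : z ∈ X
  · exact Or.inl fun x hx => (hz x hx).2 hzX
  · exact Or.inr (Finset.disjoint_left.2 fun x hx hxX => hzX ((hz x hx).1 hxX))

lemma side_laminar {v' z' : W} (hb : H.IsBridge s(v, z)) (h' : H.Adj v' z')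
    (hc : H.connectedComponentMk v = H.connectedComponentMk v') :
    side H v z ⊆ side H v' z' ∨ side H v' z' ⊆ side H v z ∨
      Disjoint (side H v z) (side H v' z') ∨
      compVerts H (H.connectedComponentMk v) ⊆ side H v z ∪ side H v' z' := by
  have hX : ∀ x y, H.Adj x y → s(x, y) ≠ s(v', z') →
      (x ∈ side H v' z' ↔ y ∈ side H v' z') := fun x y h he => mem_side_iff_of_adj h he
  by_cases hz' : z' ∈ side H v z
  · have hzT : z' ∉ side H z v := Finset.disjoint_left.1 (disjoint_side hb) hz'
    have hcover := compVerts_subset_side_union_side (H := H) (v := v) (z := z)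
    rcases side_subset_or_disjoint hX (Sym2.mem_mk_right v' z') hzT with h | h
    · exact Or.inr (Or.inr (Or.inr (hcover.trans (Finset.union_subset_union subset_rfl h))))
    · refine Or.inr (Or.inl fun x hx => ?_)
      have hxc := hc ▸ side_subset_compVerts h' hx
      exact (Finset.mem_union.1 (hcover hxc)).resolve_right fun hx' =>
        Finset.disjoint_left.1 h hx' hx
  · rcases side_subset_or_disjoint hX (Sym2.mem_mk_right v' z') hz' with h | h
    · exact Or.inl h
    · exact Or.inr (Or.inr (Or.inl h))

lemma lt_card_side (hHG : H ≤ G) (hk : k + 1 < G.girth) (h : Extendable H k v z) :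
    k < (side H v z).card := by
  obtain ⟨w, p, hlen, hchain⟩ := h.exists_walk
  have hpath : (SimpleGraph.Walk.cons h.adj p).IsPath := by
    rw [← SimpleGraph.Walk.isPath_mapLe hHG]
    refine isPath_of_isChain_of_length_lt_girth ?_ ?_
    · rwa [SimpleGraph.Walk.edges_mapLe_eq_edges]
    · rwa [SimpleGraph.Walk.length_mapLe, SimpleGraph.Walk.length_cons, hlen]
  obtain ⟨hp, hv⟩ := (SimpleGraph.Walk.cons_isPath_iff _ _).1 hpath
  rw [← Nat.succ_le_iff, Nat.succ_eq_add_one, ← hlen, ← p.length_support,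
    ← List.toFinset_card_of_nodup hp.support_nodup]
  refine Finset.card_le_card fun u hu => mem_side.2 ?_
  have hu : u ∈ p.support := by simpa using hu
  refine SimpleGraph.Reachable.symm ⟨(p.takeUntil u hu).toDeleteEdges _ fun e he hev => ?_⟩
  have he := p.edges_takeUntil_subset_edges hu he
  rw [Set.mem_singleton_iff.1 hev] at he
  exact hv (p.fst_mem_support_of_mem_edges he)

lemma mem_bigVerts_of_extendable {R : ℕ} (hHG : H ≤ G) (hk : k + 1 < G.girth) (hR : R ≤ k)
    (h : Extendable H k v z) : v ∈ bigVerts H R :=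
  Finset.mem_filter.2 ⟨Finset.mem_univ _, hR.trans ((lt_card_side hHG hk h).le.trans
    (Finset.card_le_card (side_subset_compVerts h.adj)))⟩

lemma exists_extendable_of_lt_card {d : ℕ} (hd : ∀ v, G.degree v ≤ d) (hHG : H ≤ G)
    (hcard : (d + 1) ^ k < (compVerts H (H.connectedComponentMk v)).card) :
    ∃ z, Extendable H k v z := by
  obtain ⟨w, hw, hwb⟩ := Finset.exists_mem_notMem_of_card_lt_card
    ((card_ball_le hd k v).trans_lt hcard)
  obtain ⟨p⟩ := SimpleGraph.ConnectedComponent.eq.1 (mem_compVerts.1 hw).symm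
  refine Extendable.exists_of_isPath p.bypass_isPath ?_
  by_contra! hle
  refine hwb (mem_ball_of_walk (p.bypass.mapLe hHG) ?_)
  rwa [SimpleGraph.Walk.length_mapLe]

end Side

/-! ### Graphs without sparse cuts -/

section SetFamilies

variable {α : Type*} {𝓢 : Finset (Finset α)}

lemma card_eq_card_inter_add_card_sdiff (X A : Finset α) :
    (X.card : ℝ) = (A ∩ X).card + (X \ A).card := by
  rw [Finset.inter_comm]
  exact_mod_cast (Finset.card_inter_add_card_sdiff X A).symm

lemma exists_subset_card_biUnion_inter (X : Finset α) {a : ℝ} (ha : 0 < a)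
    (hS : ∀ S ∈ 𝓢, ((S ∩ X).card : ℝ) < a) (h : a ≤ (𝓢.biUnion id ∩ X).card) :
    ∃ 𝓢' ⊆ 𝓢, a ≤ (𝓢'.biUnion id ∩ X).card ∧ ((𝓢'.biUnion id ∩ X).card : ℝ) < 2 * a := by
  induction 𝓢 using Finset.induction_on with
  | empty => exact absurd (by simpa using h) (not_le.2 ha)
  | insert S 𝓢 _ ih =>
    by_cases hlarge : a ≤ (𝓢.biUnion id ∩ X).card
    · obtain ⟨𝓢', hsub, hcard⟩ := ih (fun T hT => hS T (Finset.mem_insert_of_mem hT)) hlarge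
      exact ⟨𝓢', hsub.trans (Finset.subset_insert _ _), hcard⟩
    · refine ⟨_, subset_rfl, h, ?_⟩
      have hunion : (((insert S 𝓢).biUnion id ∩ X).card : ℝ) ≤
          (S ∩ X).card + (𝓢.biUnion id ∩ X).card := by
        rw [Finset.biUnion_insert, Finset.union_inter_distrib_right]
        exact_mod_cast Finset.card_union_le _ _
      linarith [hS S (Finset.mem_insert_self _ _)]

lemma exists_pairwiseDisjoint_biUnion_eq
    (h : ∀ S ∈ 𝓢, ∀ T ∈ 𝓢, S ⊆ T ∨ T ⊆ S ∨ Disjoint S T) :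
    ∃ 𝓜 ⊆ 𝓢, (𝓜 : Set (Finset α)).PairwiseDisjoint id ∧ 𝓜.biUnion id = 𝓢.biUnion id := by
  refine ⟨𝓢.filter (Maximal (· ∈ 𝓢)), Finset.filter_subset _ _, fun S hS T hT hne => ?_,
    (Finset.biUnion_subset_biUnion_of_subset_left _ (Finset.filter_subset _ _)).antisymm
      fun x hx => ?_⟩
  · obtain ⟨hS, hSmax⟩ := Finset.mem_filter.1 (Finset.mem_coe.1 hS)
    obtain ⟨hT, hTmax⟩ := Finset.mem_filter.1 (Finset.mem_coe.1 hT)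
    rcases h S hS T hT with hST | hTS | hdisj
    · exact absurd (hSmax.eq_of_le hT hST) hne
    · exact absurd (hTmax.eq_of_le hS hTS).symm hne
    · exact hdisj
  · obtain ⟨S, hS, hxS⟩ := Finset.mem_biUnion.1 hx
    obtain ⟨M, hSM, hM⟩ := Finset.exists_le_maximal 𝓢 hS
    exact Finset.mem_biUnion.2 ⟨M, Finset.mem_filter.2 ⟨hM.prop, hM⟩, hSM hxS⟩

end SetFamilies

section Unsplit

variable {W : Type} [Fintype W] {H : SimpleGraph W} {X : Finset W} {m a : ℝ}
  {c : H.ConnectedComponent}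

lemma cutEdges_biUnion_subset (H : SimpleGraph W) (𝓢 : Finset (Finset W)) :
    cutEdges H (𝓢.biUnion id) ⊆ 𝓢.biUnion (cutEdges H) := by
  intro e he
  obtain ⟨x, y, h, hx, hy, rfl⟩ := mem_cutEdges.1 he
  obtain ⟨S, hS, hxS⟩ := Finset.mem_biUnion.1 hx
  exact Finset.mem_biUnion.2 ⟨S, hS, mem_cutEdges.2
    ⟨x, y, h, hxS, fun hyS => hy (Finset.mem_biUnion.2 ⟨S, hS, hyS⟩), rfl⟩⟩

lemma cutEdges_compVerts (H : SimpleGraph W) (c : H.ConnectedComponent) :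
    cutEdges H (compVerts H c) = ∅ := by
  refine Finset.eq_empty_of_forall_notMem fun e he => ?_
  obtain ⟨x, y, h, hx, hy, rfl⟩ := mem_cutEdges.1 he
  rw [mem_compVerts] at hx hy
  exact hy (hx ▸ (SimpleGraph.ConnectedComponent.eq.2 h.reachable).symm)

/-- Otherwise some subfamily would split `X` into two large parts. -/
lemma Unsplit.card_biUnion_inter_lt (hU : Unsplit H X m a) (ha : 0 < a) (hX : 3 * a ≤ X.card)
    {𝓢 : Finset (Finset W)} (hS : ∀ S ∈ 𝓢, ((S ∩ X).card : ℝ) < a)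
    (hcut : ∀ 𝓢' ⊆ 𝓢, ((cutEdges H (𝓢'.biUnion id)).card : ℝ) ≤ m) :
    ((𝓢.biUnion id ∩ X).card : ℝ) < a := by
  by_contra! h
  obtain ⟨𝓢', hsub, hle, hlt⟩ := exists_subset_card_biUnion_inter X ha hS h
  have hsplit := card_eq_card_inter_add_card_sdiff X (𝓢'.biUnion id)
  rcases hU _ (hcut 𝓢' hsub) with hsmall | hsmall <;> linarith

lemma Unsplit.card_sdiff_compVerts_lt (hU : Unsplit H X m a) (hm : 0 ≤ m)
    (hc : a ≤ (compVerts H c ∩ X).card) : ((X \ compVerts H c).card : ℝ) < a :=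
  (hU _ (by simpa [cutEdges_compVerts] using hm)).resolve_left (not_lt.2 hc)

lemma Unsplit.exists_le_card_compVerts_inter (hU : Unsplit H X m a) (hm : 0 ≤ m) (ha : 0 < a)
    (hX : 3 * a ≤ X.card) : ∃ c, a ≤ (compVerts H c ∩ X).card := by
  by_contra! h
  set 𝓢 : Finset (Finset W) := Finset.univ.image (compVerts H)
  have hcover : 𝓢.biUnion id = Finset.univ := Finset.eq_univ_of_forall fun v =>
    Finset.mem_biUnion.2 ⟨_, Finset.mem_image_of_mem _
      (Finset.mem_univ (H.connectedComponentMk v)), mem_compVerts.2 rfl⟩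
  have hsmall : ∀ S ∈ 𝓢, ((S ∩ X).card : ℝ) < a := by
    rintro S hS
    obtain ⟨c, -, rfl⟩ := Finset.mem_image.1 hS
    exact h c
  have hcut : ∀ 𝓢' ⊆ 𝓢, cutEdges H (𝓢'.biUnion id) = ∅ := by
    refine fun 𝓢' h𝓢' => Finset.subset_empty.1
      ((cutEdges_biUnion_subset H 𝓢').trans (Finset.biUnion_subset.2 fun S hS => ?_))
    obtain ⟨c, -, rfl⟩ := Finset.mem_image.1 (h𝓢' hS)
    rw [cutEdges_compVerts]
  have hlt := hU.card_biUnion_inter_lt ha hX hsmall fun 𝓢' h𝓢' => by simpa [hcut 𝓢' h𝓢'] using hm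
  rw [hcover, Finset.univ_inter] at hlt
  linarith

lemma Unsplit.le_card_largest_inter (hU : Unsplit H X m a) (hm : 0 ≤ m) (ha : 0 < a)
    (hX : 3 * a ≤ X.card) (hc : IsLargestComp H c)
    (hsdiff : 2 * a < (compVerts H c).card → ((compVerts H c \ X).card : ℝ) ≤ a) :
    a ≤ (compVerts H c ∩ X).card := by
  obtain ⟨c', hc'⟩ := hU.exists_le_card_compVerts_inter hm ha hX
  have hrest := hU.card_sdiff_compVerts_lt hm hc'
  have hX' := card_eq_card_inter_add_card_sdiff X (compVerts H c')
  have hle : ((compVerts H c' ∩ X).card : ℝ) ≤ (compVerts H c).card := by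
    exact_mod_cast (Finset.card_le_card Finset.inter_subset_left).trans (hc c')
  have hsum := card_eq_card_inter_add_card_sdiff (compVerts H c) X
  rw [Finset.inter_comm] at hsum
  linarith [hsdiff (by linarith)]

end Unsplit

section SmallSides

variable {W : Type} [Fintype W] {H : SimpleGraph W} {X : Finset W} {m a : ℝ} {k : ℕ}
  {c : H.ConnectedComponent} {v z : W}

/-- The sides, with more than `k` vertices but fewer than `a` in `X`, of the bridges in the
component `c`. -/
def smallSides (H : SimpleGraph W) (X : Finset W) (c : H.ConnectedComponent) (k : ℕ) (a : ℝ) :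
    Finset (Finset W) :=
  Finset.univ.filter fun S => k < S.card ∧ ((S ∩ X).card : ℝ) < a ∧
    ∃ v z, S = side H v z ∧ H.Adj v z ∧ H.IsBridge s(v, z) ∧ H.connectedComponentMk v = c

lemma smallSides_laminar (hX : 3 * a ≤ X.card) (hc : ((X \ compVerts H c).card : ℝ) < a)
    {S T : Finset W} (hS : S ∈ smallSides H X c k a) (hT : T ∈ smallSides H X c k a) :
    S ⊆ T ∨ T ⊆ S ∨ Disjoint S T := by
  obtain ⟨-, -, hSX, v, z, rfl, -, hb, hv⟩ := Finset.mem_filter.1 hS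
  obtain ⟨-, -, hTX, v', z', rfl, h', -, hv'⟩ := Finset.mem_filter.1 hT
  rcases side_laminar hb h' (hv.trans hv'.symm) with h | h | h | h
  · exact Or.inl h
  · exact Or.inr (Or.inl h)
  · exact Or.inr (Or.inr h)
  · have hsub : compVerts H c ∩ X ⊆ (side H v z ∩ X) ∪ (side H v' z' ∩ X) := by
      rw [← Finset.union_inter_distrib_right]
      exact Finset.inter_subset_inter_right (hv ▸ h)
    have hcard : ((compVerts H c ∩ X).card : ℝ) ≤
        (side H v z ∩ X).card + (side H v' z' ∩ X).card := by
      exact_mod_cast (Finset.card_le_card hsub).trans (Finset.card_union_le _ _)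
    linarith [card_eq_card_inter_add_card_sdiff X (compVerts H c)]

lemma card_cutEdges_biUnion_smallSides_le {𝓢 : Finset (Finset W)}
    (h𝓢 : 𝓢 ⊆ smallSides H X c k a) : (cutEdges H (𝓢.biUnion id)).card ≤ 𝓢.card := by
  refine (Finset.card_le_card (cutEdges_biUnion_subset H 𝓢)).trans
    ((Finset.card_biUnion_le_card_mul _ _ 1 fun S hS => ?_).trans_eq (mul_one _))
  obtain ⟨-, -, -, v, z, rfl, -⟩ := Finset.mem_filter.1 (h𝓢 hS)
  exact card_cutEdges_side_le H v z

lemma Unsplit.card_biUnion_smallSides_inter_lt (hU : Unsplit H X m a) (ha : 0 < a)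
    (hX : 3 * a ≤ X.card) (hc : ((X \ compVerts H c).card : ℝ) < a)
    (hm : Fintype.card W ≤ m * (k + 1)) :
    (((smallSides H X c k a).biUnion id ∩ X).card : ℝ) < a := by
  obtain ⟨𝓜, h𝓜, hdisj, hunion⟩ :=
    exists_pairwiseDisjoint_biUnion_eq fun S hS T hT => smallSides_laminar hX hc hS hT
  have hmem : ∀ S ∈ 𝓜, k + 1 ≤ S.card ∧ ((S ∩ X).card : ℝ) < a := fun S hS =>
    let ⟨_, hk, hSX, _⟩ := Finset.mem_filter.1 (h𝓜 hS)
    ⟨hk, hSX⟩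
  have hcard : (𝓜.card : ℝ) ≤ m := by
    have hmul : 𝓜.card * (k + 1) ≤ Fintype.card W :=
      (Finset.card_nsmul_le_sum 𝓜 Finset.card (k + 1) fun S hS => (hmem S hS).1).trans
        ((Finset.card_biUnion hdisj).symm.trans_le (Finset.card_le_univ _))
    have hmul' : (𝓜.card : ℝ) * (k + 1) ≤ Fintype.card W := by exact_mod_cast hmul
    exact le_of_mul_le_mul_right (hmul'.trans hm) (by positivity)
  rw [← hunion]
  refine hU.card_biUnion_inter_lt ha hX (fun S hS => (hmem S hS).2) fun 𝓢 h𝓢 => le_trans ?_ hcard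
  exact_mod_cast (card_cutEdges_biUnion_smallSides_le (h𝓢.trans h𝓜)).trans
    (Finset.card_le_card h𝓢)

lemma Unsplit.side_mem_smallSides (hU : Unsplit H X m a) (hm : 1 ≤ m) (h : H.Adj v z)
    (hb : H.IsBridge s(v, z)) (hc : H.connectedComponentMk v = c) (hk : k < (side H v z).card)
    (hk' : k < (side H z v).card) :
    side H v z ∈ smallSides H X c k a ∨ side H z v ∈ smallSides H X c k a := by
  have hcut : ((cutEdges H (side H v z)).card : ℝ) ≤ m :=
    le_trans (by exact_mod_cast card_cutEdges_side_le H v z) hm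
  refine (hU _ hcut).imp
    (fun hlt => Finset.mem_filter.2 ⟨Finset.mem_univ _, hk, hlt, v, z, rfl, h, hb, hc⟩)
    fun hlt => Finset.mem_filter.2 ⟨Finset.mem_univ _, hk', lt_of_le_of_lt ?_ hlt, z, v, rfl,
      h.symm, by rwa [Sym2.eq_swap],
      (SimpleGraph.ConnectedComponent.eq.2 h.symm.reachable).trans hc⟩
  refine Nat.cast_le.2 (Finset.card_le_card fun x hx => ?_)
  obtain ⟨hxs, hxX⟩ := Finset.mem_inter.1 hx
  exact Finset.mem_sdiff.2 ⟨hxX, Finset.disjoint_right.1 (disjoint_side hb) hxs⟩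

end SmallSides

section Exceptional

variable {W : Type} [Fintype W] {G H K : SimpleGraph W} {X : Finset W} {m a : ℝ} {k d : ℕ}
  {c : H.ConnectedComponent}

/-- The vertices of `X` outside the component `c`, together with those in small sides of bridges
of `c` and the neighbours of the latter. -/
def exceptional (G H : SimpleGraph W) (X : Finset W) (c : H.ConnectedComponent) (k : ℕ) (a : ℝ) :
    Finset W :=
  (X \ compVerts H c) ∪
    (((smallSides H X c k a).biUnion id ∩ X) ∪
      ((smallSides H X c k a).biUnion id ∩ X).biUnion fun v => G.neighborFinset v)

lemma card_exceptional_le (hd : ∀ v, G.degree v ≤ d) (hc : ((X \ compVerts H c).card : ℝ) ≤ a)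
    (hsides : (((smallSides H X c k a).biUnion id ∩ X).card : ℝ) ≤ a) :
    ((exceptional G H X c k a).card : ℝ) ≤ (d + 2) * a := by
  set Y := (smallSides H X c k a).biUnion id ∩ X
  have hnbr : (Y.biUnion fun v => G.neighborFinset v).card ≤ Y.card * d :=
    Finset.card_biUnion_le_card_mul _ _ d fun v _ =>
      (G.card_neighborFinset_eq_degree v).trans_le (hd v)
  calc ((exceptional G H X c k a).card : ℝ)
      ≤ (X \ compVerts H c).card + (Y.card + Y.card * d) := by
        exact_mod_cast (Finset.card_union_le _ _).trans (Nat.add_le_add_left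
          ((Finset.card_union_le _ _).trans (Nat.add_le_add_left hnbr _)) _)
    _ ≤ a + (a + a * d) := by gcongr
    _ = (d + 2) * a := by ring

/-- An extendable dart outside the 2-core is a bridge, and the second extendable dart at `v` makes
both sides of this bridge large, so that one of them is a small side in the sense above. -/
lemma Unsplit.twoCoreComp_adj (hU : Unsplit H X m a) (hm : 1 ≤ m) (hKH : K ≤ H) (hHG : H ≤ G)
    (hk : k + 1 < G.girth) (hX : ∀ v z, Extendable K k v z → v ∈ X) {v z z' : W}
    (hv : v ∉ exceptional G H X c k a) (hz : Extendable K k v z) (hz' : Extendable K k v z')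
    (hne : z' ≠ z) : (twoCoreComp H c).Adj v z := by
  simp only [exceptional, Finset.mem_union, Finset.mem_sdiff, Finset.mem_biUnion, not_or,
    Finset.mem_inter, not_and, not_not, not_exists, mem_compVerts, id] at hv
  obtain ⟨hvc, hvs, hvn⟩ := hv
  have hvX := hX v z hz
  have hadj := hKH hz.adj
  by_contra hcore
  have hb : H.IsBridge s(v, z) := by
    by_contra hb
    exact hcore (twoCoreComp_adj_of_not_isBridge hadj (hvc hvX) hb)
  have hrev : Extendable K k z v := hz'.reverse_dart hz.adj hne
  rcases hU.side_mem_smallSides hm hadj hb (hvc hvX) (lt_card_side hHG hk (hz.mono hKH))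
    (lt_card_side hHG hk (hrev.mono hKH)) with h | h
  · exact hvn z ⟨⟨_, h, self_mem_side⟩, hX z v hrev⟩ (by simpa using (hHG hadj).symm)
  · exact hvs ⟨_, h, self_mem_side⟩ hvX

end Exceptional

section TwoRounds

variable {W : Type} [Fintype W] {G : SimpleGraph W} {R k d : ℕ} {s t : Finset (Sym2 W)} {m a : ℝ}
  {c : (keep G (s ∪ t)).ConnectedComponent}

/-- The vertices with an extendable dart. -/
def extVerts (G : SimpleGraph W) (k : ℕ) (s : Finset (Sym2 W)) : Finset W :=
  Finset.univ.filter fun v => 1 ≤ extCount G k v s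

lemma mem_extVerts {v : W} : v ∈ extVerts G k s ↔ ∃ z, Extendable (keep G s) k v z := by
  simp only [extVerts, extCount, Finset.mem_filter, Finset.mem_univ, true_and,
    Finset.one_le_card, Finset.Nonempty, SimpleGraph.mem_neighborFinset]
  exact exists_congr fun z => and_iff_right_of_imp fun h => h.adj.1

lemma card_extVerts (G : SimpleGraph W) (k : ℕ) (s : Finset (Sym2 W)) :
    ((extVerts G k s).card : ℝ) = stat G k (fun j => if 1 ≤ j then 1 else 0) s := by
  rw [stat, Finset.sum_boole, extVerts]

lemma extVerts_mono (h : s ⊆ t) : extVerts G k s ⊆ extVerts G k t := by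
  intro v hv
  obtain ⟨z, hz⟩ := mem_extVerts.1 hv
  exact mem_extVerts.2 ⟨z, hz.mono (keep_mono h)⟩

lemma card_compVerts_sdiff_bigVerts_le (hd : ∀ v, G.degree v ≤ d) (hk : k + 1 < G.girth)
    (hR : R ≤ k) (hc : (d + 1) ^ k < (compVerts (keep G (s ∪ t)) c).card) :
    ((compVerts (keep G (s ∪ t)) c \ bigVerts (keep G s) R).card : ℝ) ≤
      stat G k (fun j => if 1 ≤ j then 1 else 0) (s ∪ t) -
        stat G k (fun j => if 1 ≤ j then 1 else 0) s := by
  rw [← card_extVerts, ← card_extVerts,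
    ← Finset.cast_card_sdiff (extVerts_mono Finset.subset_union_left)]
  refine Nat.cast_le.2 (Finset.card_le_card (Finset.sdiff_subset_sdiff (fun v hv => ?_)
    fun v hv => ?_))
  · rw [← mem_compVerts.1 hv] at hc
    exact mem_extVerts.2 (exists_extendable_of_lt_card hd (keep_le _) hc)
  · obtain ⟨z, hz⟩ := mem_extVerts.1 hv
    exact mem_bigVerts_of_extendable (keep_le s) hk hR hz

lemma Unsplit.exists_exceptional (hU : Unsplit (keep G (s ∪ t)) (bigVerts (keep G s) R) m a)
    (ha : 0 < a) (hm : Fintype.card W ≤ m * (k + 1)) (hd : ∀ v, G.degree v ≤ d)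
    (hk : k + 1 < G.girth) (hR : R ≤ k) (hball : ((d : ℝ) + 1) ^ k ≤ 2 * a)
    (hstat : stat G k (fun j => if 1 ≤ j then 1 else 0) (s ∪ t) -
      stat G k (fun j => if 1 ≤ j then 1 else 0) s ≤ a)
    (hc : IsLargestComp (keep G (s ∪ t)) c) :
    ∃ B : Finset W, (B.card : ℝ) ≤ (d + 3) * a ∧ ∀ v ∉ B, 2 ≤ extCount G k v s →
      ∀ z, Extendable (keep G s) k v z → (twoCoreComp (keep G (s ∪ t)) c).Adj v z := by
  set X := bigVerts (keep G s) R
  have hX : ∀ v z, Extendable (keep G s) k v z → v ∈ X := fun v z h =>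
    mem_bigVerts_of_extendable (keep_le s) hk hR h
  rcases lt_or_ge (X.card : ℝ) (3 * a) with hlt | hge
  · refine ⟨X, hlt.le.trans ?_, fun v hv _ z hz => absurd (hX v z hz) hv⟩
    gcongr
    exact le_add_of_nonneg_left (Nat.cast_nonneg d)
  have hm1 : 1 ≤ m := by
    have hkW : (k : ℝ) + 1 ≤ Fintype.card W := by exact_mod_cast hk.le.trans (girth_le_card G)
    exact le_of_mul_le_mul_right (by linarith) (by positivity : (0 : ℝ) < k + 1)
  have hcX := hU.le_card_largest_inter (zero_le_one.trans hm1) ha hge hc fun hlarge =>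
    (card_compVerts_sdiff_bigVerts_le hd hk hR (by exact_mod_cast hball.trans_lt hlarge)).trans
      hstat
  have hrest := hU.card_sdiff_compVerts_lt (zero_le_one.trans hm1) hcX
  have hsides := hU.card_biUnion_smallSides_inter_lt ha hge hrest hm
  refine ⟨exceptional G (keep G (s ∪ t)) X c k a, (card_exceptional_le hd hrest.le hsides.le).trans
    (by gcongr; norm_num), fun v hv hv2 z hz => ?_⟩
  obtain ⟨z', hz', hne⟩ := Finset.exists_mem_ne hv2 z
  exact hU.twoCoreComp_adj hm1 (keep_mono Finset.subset_union_left) (keep_le _) hk hX hv hz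
    (Finset.mem_filter.1 hz').2 hne

end TwoRounds

/-! ### Size of the 2-core -/

/-- The weights whose linear statistics of the extension counts approximate the number of vertices
in large components, the number of vertices of the 2-core and the sum of its degrees. -/
def coreWeight : Fin 3 → ℕ → ℝ
  | 0, j => if 1 ≤ j then 1 else 0
  | 1, j => if 2 ≤ j then 1 else 0
  | 2, j => if 2 ≤ j then (j : ℝ) else 0

/-- The 2-cores of the largest components of `H` have vertex and edge densities within `ε` of `θ`
and `η`. -/
def CoreDensitiesNear {W : Type} [Fintype W] (H : SimpleGraph W) (θ η ε : ℝ) : Prop :=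
  ∀ c : H.ConnectedComponent, IsLargestComp H c →
    |((twoCoreComp H c).support.ncard : ℝ) / Fintype.card W - θ| < ε ∧
    |((twoCoreComp H c).edgeSet.ncard : ℝ) / Fintype.card W - η| < ε

section Weights

variable {d : ℕ} {p q ε : ℝ}

lemma coreWeight_mem_Icc (hd : 0 < d) (i : Fin 3) {j : ℕ} (hj : j ≤ d) :
    0 ≤ coreWeight i j ∧ coreWeight i j ≤ d := by
  have hd1 : (1 : ℝ) ≤ d := by exact_mod_cast hd
  have hjd : (j : ℝ) ≤ d := by exact_mod_cast hj
  match i with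
  | 0 | 1 | 2 => rw [coreWeight]; split_ifs <;> constructor <;> linarith

lemma binomMean_coreWeight_one (hd : 0 < d) (hq : q = (1 - p + p * q) ^ (d - 1)) :
    binomMean d (p * (1 - q)) (coreWeight 1) = 1 - q - ((d : ℝ) - 1) * p * q * (1 - q) := by
  obtain ⟨m, rfl⟩ := Nat.exists_eq_add_of_lt hd
  rw [zero_add, Nat.add_sub_cancel] at hq
  change binomMean _ _ (fun j => if 2 ≤ j then 1 else 0) = _
  rw [zero_add, binomMean_two_le, pow_succ, show 1 - p * (1 - q) = 1 - p + p * q by ring, ← hq]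
  push_cast
  ring

lemma binomMean_coreWeight_two (hd : 0 < d) (hq : q = (1 - p + p * q) ^ (d - 1)) :
    binomMean d (p * (1 - q)) (coreWeight 2) / 2 = 1 / 2 * p * d * (1 - q) ^ 2 := by
  obtain ⟨m, rfl⟩ := Nat.exists_eq_add_of_lt hd
  rw [zero_add, Nat.add_sub_cancel] at hq
  change binomMean _ _ (fun j : ℕ => if 2 ≤ j then (j : ℝ) else 0) / 2 = _
  rw [zero_add, binomMean_mul_two_le, show 1 - p * (1 - q) = 1 - p + p * q by ring, ← hq]
  push_cast
  ring

lemma exists_forall_abs_binomMean_sub_lt {ι : Type*} [Finite ι] (m : ℕ) (r : ℝ)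
    (φ : ι → ℕ → ℝ) (hε : 0 < ε) :
    ∃ η > 0, ∀ x, |x - r| < η → ∀ i, |binomMean m x (φ i) - binomMean m r (φ i)| < ε := by
  have h : ∀ᶠ x in nhds r, ∀ i, |binomMean m x (φ i) - binomMean m r (φ i)| < ε :=
    Filter.eventually_all.2 fun i =>
      Metric.continuousAt_iff'.1 (continuous_binomMean m (φ i)).continuousAt ε hε
  obtain ⟨η, hη, h⟩ := Metric.eventually_nhds_iff.1 h
  exact ⟨η, hη, fun x hx => h hx⟩

lemma exists_two_round_densities {ι : Type*} [Finite ι] (φ : ι → ℕ → ℝ) (hd : 3 ≤ d)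
    (hp0 : 0 < p) (hp1 : p < 1) (hq0 : 0 ≤ q) (hq1 : q < 1)
    (hq : q = (1 - p + p * q) ^ (d - 1)) (hε : 0 < ε) :
    ∃ p₁ p₂, 0 ≤ p₁ ∧ p₁ ≤ 1 ∧ 0 < p₂ ∧ p₂ ≤ 1 ∧ 1 - p = (1 - p₁) * (1 - p₂) ∧
      ∃ k₀, ∀ k ≥ k₀,
        (∀ i, |binomMean d (extProb p₁ d k) (φ i) - binomMean d (p * (1 - q)) (φ i)| < ε) ∧
        ∀ i, |binomMean d (extProb p d k) (φ i) - binomMean d (p * (1 - q)) (φ i)| < ε := by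
  obtain ⟨η, hη0, hη⟩ := exists_forall_abs_binomMean_sub_lt d (p * (1 - q)) φ hε
  obtain ⟨p₁, hp₁0, hp₁p, k₀, hk₀⟩ := exists_extProb_close hd hp0 hp1.le hq0 hq1 hq hη0
  have hp₁1 : 0 < 1 - p₁ := by linarith
  refine ⟨p₁, (p - p₁) / (1 - p₁), hp₁0.le, by linarith, div_pos (by linarith) hp₁1,
    (div_le_one hp₁1).2 (by linarith), ?_, k₀,
    fun k hk => ⟨hη _ (hk₀ k hk).2, hη _ (hk₀ k hk).1⟩⟩
  field_simp
  ring

end Weights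

section CoreDensities

variable {W : Type} [Fintype W] {G : SimpleGraph W} {R k d : ℕ} {δ ε p p₁ p₂ η x : ℝ}
  {a : Fin 3 → ℝ} {s t : Finset (Sym2 W)}

lemma Unsplit.coreDensitiesNear [Nonempty W]
    (hU : Unsplit (keep G (s ∪ t)) (bigVerts (keep G s) R) (δ * Fintype.card W)
      (ε * Fintype.card W))
    (hε : 0 < ε) (hδ : 1 ≤ δ * (k + 1)) (hd : ∀ v, G.degree v ≤ d) (hk : k + 1 < G.girth)
    (hR : R ≤ k) (hball : ((d : ℝ) + 1) ^ k ≤ 2 * (ε * Fintype.card W))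
    (hlower : ∀ i, Fintype.card W * (a i - ε / 2) ≤ stat G k (coreWeight i) s)
    (hupper : ∀ i, stat G k (coreWeight i) (s ∪ t) ≤ Fintype.card W * (a i + ε / 2)) :
    CoreDensitiesNear (keep G (s ∪ t)) (a 1) (a 2 / 2) ((d + 1) * (d + 4) * ε) := by
  intro c hc
  have hn : (0 : ℝ) < Fintype.card W := by exact_mod_cast Fintype.card_pos
  have hεn : 0 < ε * Fintype.card W := by positivity
  have hdεn : 0 ≤ d * (ε * Fintype.card W) := by positivity
  have hddεn : 0 ≤ d * (d * (ε * Fintype.card W)) := by positivity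
  obtain ⟨B, hBcard, hB⟩ := hU.exists_exceptional hεn (by nlinarith) hd hk hR hball
    (show stat G k (coreWeight 0) _ - stat G k (coreWeight 0) _ ≤ _ by
      linarith [hlower 0, hupper 0]) hc
  have hdB : (d : ℝ) * B.card ≤ d * ((d + 3) * (ε * Fintype.card W)) := by gcongr
  have hdeg := fun v => two_le_ncard_twoCoreComp (c := c) (v := v)
  have hvertU := (ncard_support_le_stat twoCoreComp_le hdeg k).trans (hupper 1)
  have hedgeU := (two_mul_ncard_edgeSet_le_stat twoCoreComp_le hdeg k).trans (hupper 2)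
  have hvertL := (hlower 1).trans (stat_le_ncard_support_add hB)
  have hedgeL := (hlower 2).trans (stat_le_two_mul_ncard_edgeSet_add hd hB)
  simp only [abs_lt, lt_sub_iff_add_lt, lt_div_iff₀ hn, sub_lt_iff_lt_add, div_lt_iff₀ hn]
  refine ⟨⟨?_, ?_⟩, ?_, ?_⟩ <;> linarith

variable {ι : Type*} [Fintype ι] {φ : ι → ℕ → ℝ} {α : ι → ℝ}

lemma prob_not_forall_le_stat_le [Nonempty W] (hp0 : 0 ≤ p) (hp1 : p ≤ 1) (hd0 : 0 < d)
    (hd : ∀ v, G.degree v = d) (hk : 2 * k + 2 < G.girth)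
    (hφ : ∀ i, ∀ j ≤ d, 0 ≤ φ i j ∧ φ i j ≤ d) (hη : 0 ≤ η)
    (hα : ∀ i, |binomMean d (extProb p d k) (φ i) - α i| < η) :
    prob (edgeFinset' G) p
        (fun s => ¬∀ i, Fintype.card W * (α i - 2 * η) ≤ stat G k (φ i) s) ≤
      Fintype.card ι * Real.exp (-statRate d k η * Fintype.card W) := by
  refine (prob_mono hp0 hp1 fun s _ hs => ?_).trans
    ((prob_exists_le_sum hp0 hp1 Finset.univ fun i s =>
      stat G k (φ i) s ≤ Fintype.card W * (binomMean d (extProb p d k) (φ i) - η)).trans ?_)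
  · push Not at hs
    obtain ⟨i, hi⟩ := hs
    refine ⟨i, Finset.mem_univ i, hi.le.trans ?_⟩
    exact mul_le_mul_of_nonneg_left (by linarith [(abs_lt.1 (hα i)).1]) (Nat.cast_nonneg _)
  · rw [← nsmul_eq_mul, ← Finset.card_univ]
    exact Finset.sum_le_card_nsmul _ _ _ fun i _ =>
      prob_stat_le_le hp0 hp1 hd0 hd hk (hφ i) hη

lemma prob_not_forall_stat_le_le [Nonempty W] (hp0 : 0 ≤ p) (hp1 : p ≤ 1) (hd0 : 0 < d)
    (hd : ∀ v, G.degree v = d) (hk : 2 * k + 2 < G.girth)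
    (hφ : ∀ i, ∀ j ≤ d, 0 ≤ φ i j ∧ φ i j ≤ d) (hη : 0 ≤ η)
    (hα : ∀ i, |binomMean d (extProb p d k) (φ i) - α i| < η) :
    prob (edgeFinset' G) p
        (fun s => ¬∀ i, stat G k (φ i) s ≤ Fintype.card W * (α i + 2 * η)) ≤
      Fintype.card ι * Real.exp (-statRate d k η * Fintype.card W) := by
  refine (prob_mono hp0 hp1 fun s _ hs => ?_).trans
    ((prob_exists_le_sum hp0 hp1 Finset.univ fun i s =>
      Fintype.card W * (binomMean d (extProb p d k) (φ i) + η) ≤ stat G k (φ i) s).trans ?_)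
  · push Not at hs
    obtain ⟨i, hi⟩ := hs
    refine ⟨i, Finset.mem_univ i, le_trans ?_ hi.le⟩
    exact mul_le_mul_of_nonneg_left (by linarith [(abs_lt.1 (hα i)).2]) (Nat.cast_nonneg _)
  · rw [← nsmul_eq_mul, ← Finset.card_univ]
    exact Finset.sum_le_card_nsmul _ _ _ fun i _ =>
      prob_le_stat_le hp0 hp1 hd0 hd hk (hφ i) hη

lemma one_sub_le_percProb_coreDensitiesNear [Nonempty W] (hp0 : 0 ≤ p) (hp1 : p ≤ 1)
    (hp₁0 : 0 ≤ p₁) (hp₁1 : p₁ ≤ 1) (hp₂0 : 0 ≤ p₂) (hp₂1 : p₂ ≤ 1)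
    (hp : 1 - p = (1 - p₁) * (1 - p₂)) (hd0 : 0 < d) (hd : ∀ v, G.degree v = d)
    (hk : 2 * k + 2 < G.girth) (hR : R ≤ k) (hε : 0 < ε) (hδ : 1 ≤ δ * (k + 1))
    (hball : ((d : ℝ) + 1) ^ k ≤ 2 * (ε * Fintype.card W))
    (ha₁ : ∀ i, |binomMean d (extProb p₁ d k) (coreWeight i) - a i| < ε / 4)
    (ha : ∀ i, |binomMean d (extProb p d k) (coreWeight i) - a i| < ε / 4)
    (hU : ∀ s, prob (edgeFinset' G) p₂ (fun t => ¬Unsplit (keep G (s ∪ t))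
      (bigVerts (keep G s) R) (δ * Fintype.card W) (ε * Fintype.card W)) ≤ x) :
    1 - (6 * Real.exp (-statRate d k (ε / 4) * Fintype.card W) + x) ≤
      percProb G p fun H => CoreDensitiesNear H (a 1) (a 2 / 2) ((d + 1) * (d + 4) * ε) := by
  have hφ := fun i j => coreWeight_mem_Icc hd0 i (j := j)
  have hlower := prob_not_forall_le_stat_le hp₁0 hp₁1 hd0 hd hk hφ (by positivity) ha₁
  have hupper := prob_not_forall_stat_le_le hp0 hp1 hd0 hd hk hφ (by positivity) ha
  have hunion := one_sub_le_prob_of_union hp hp₁0 hp₁1 hp₂0 hp₂1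
    (Q := fun s => CoreDensitiesNear (keep G s) (a 1) (a 2 / 2) ((d + 1) * (d + 4) * ε))
    (fun s _ t _ hs hst hU => hU.coreDensitiesNear hε hδ (fun v => (hd v).le) (by omega) hR hball
      (fun i => by linarith [hs i]) fun i => by linarith [hst i]) hlower hupper hU
  have hpercProb : percProb G p (fun H =>
      CoreDensitiesNear H (a 1) (a 2 / 2) ((d + 1) * (d + 4) * ε)) =
      prob (edgeFinset' G) p fun s =>
        CoreDensitiesNear (keep G s) (a 1) (a 2 / 2) ((d + 1) * (d + 4) * ε) :=
    prob_congr fun s hs => by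
      rw [fromEdgeSet_eq_keep fun e he => mem_edgeFinset'.1 (hs he)]
  rw [hpercProb]
  refine le_trans (le_of_eq ?_) hunion
  rw [Fintype.card_fin]
  push_cast
  ring

end CoreDensities

lemma exists_nat_scales (k₀ R₀ : ℕ) (B : ℝ) {δ ε : ℝ} (hδ : 0 < δ) (hε : 0 < ε) :
    ∃ k R : ℕ, k₀ ≤ k ∧ R₀ ≤ k ∧ 1 ≤ δ * (k + 1) ∧ 2 * k + 2 < R ∧ B ^ k ≤ 2 * (ε * R) := by
  have hlin := tendsto_natCast_atTop_atTop (R := ℝ)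
  have hk := ((hlin.atTop_add (tendsto_const_nhds (x := 1))).const_mul_atTop hδ
    ).eventually_ge_atTop 1
  obtain ⟨k, hδk, hk₀, hR₀⟩ :=
    (hk.and ((Filter.eventually_ge_atTop k₀).and (Filter.eventually_ge_atTop R₀))).exists
  have hR := ((hlin.const_mul_atTop hε).const_mul_atTop two_pos).eventually_ge_atTop (B ^ k)
  obtain ⟨R, hBR, hkR⟩ := (hR.and (Filter.eventually_gt_atTop (2 * k + 2))).exists
  exact ⟨k, R, hk₀, hR₀, hδk, hkR, hBR⟩

lemma mul_exp_add_exp_le {u v C n : ℝ} (hC : 0 ≤ C) (hn : 0 ≤ n) :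
    C * Real.exp (-u * n) + Real.exp (-v * n) ≤ (C + 1) * Real.exp (-min u v * n) := by
  rw [add_mul, one_mul]
  gcongr
  exacts [min_le_left _ _, min_le_right _ _]

lemma exists_one_sub_exp_le_percProb_coreDensitiesNear {d : ℕ} {p q ε b : ℝ} (hd : 3 ≤ d)
    (hp0 : 0 < p) (hp1 : p < 1) (hq0 : 0 ≤ q) (hq1 : q < 1) (hq : q = (1 - p + p * q) ^ (d - 1))
    (hε : 0 < ε) (hb : 0 < b) :
    ∃ c > 0, ∃ R > 0, ∀ (W : Type) [Fintype W] (G : SimpleGraph W),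
      IsRegularExpander G b d → R ≤ G.girth →
        1 - 7 * Real.exp (-c * Fintype.card W) ≤ percProb G p fun H =>
          CoreDensitiesNear H (binomMean d (p * (1 - q)) (coreWeight 1))
            (binomMean d (p * (1 - q)) (coreWeight 2) / 2) ((d + 1) * (d + 4) * ε) := by
  obtain ⟨p₁, p₂, hp₁0, hp₁1, hp₂0, hp₂1, hp, k₀, hk₀⟩ :=
    exists_two_round_densities coreWeight hd hp0 hp1 hq0 hq1 hq (show 0 < ε / 4 by positivity)
  obtain ⟨δ, hδ, R₀, c₀, hc₀, hunsplit⟩ := exists_prob_not_unsplit_le hb d hp₂0 hp₂1 hε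
  obtain ⟨k, R, hk, hR₀, hδk, hkR, hball⟩ := exists_nat_scales k₀ R₀ (d + 1) hδ hε
  have hd0 : 0 < d := by omega
  refine ⟨min (statRate d k (ε / 4)) c₀, lt_min (statRate_pos hd0 k (by positivity)) hc₀, R,
    by omega, fun W _ G hG hgirth => ?_⟩
  have hRW : R ≤ Fintype.card W := hgirth.trans (girth_le_card G)
  have : Nonempty W := Fintype.card_pos_iff.1 (by omega)
  have hdeg v : G.degree v = d := (degree_eq_ncard_neighborSet G v).trans (hG.2 v)
  have hballW : ((d : ℝ) + 1) ^ k ≤ 2 * (ε * Fintype.card W) := hball.trans (by gcongr)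
  have hlarge := one_sub_le_percProb_coreDensitiesNear
    (a := fun i => binomMean d (p * (1 - q)) (coreWeight i)) hp0.le hp1.le hp₁0 hp₁1 hp₂0.le hp₂1 hp
    hd0 hdeg (by omega) hR₀ hε hδk hballW (hk₀ k hk).1 (hk₀ k hk).2 (hunsplit R₀ le_rfl W G hG.1)
  refine le_trans ?_ hlarge
  have := mul_exp_add_exp_le (u := statRate d k (ε / 4)) (v := c₀) (C := 6) (by norm_num)
    (Nat.cast_nonneg (Fintype.card W))
  linarith

theorem two_core_size (d : ℕ) (hd : 3 ≤ d) (p q : ℝ)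
    (hp : 1 / ((d : ℝ) - 1) < p) (hp1 : p < 1)
    (hq0 : 0 ≤ q) (hq1 : q < 1)
    (hq : q = (1 - p + p * q) ^ (d - 1))
    (ε b : ℝ) (hε : 0 < ε) (hb : 0 < b) :
    ∃ c > (0:ℝ), ∃ C > (0:ℝ), ∃ R : ℕ, 0 < R ∧
      ∀ (V : Type) [Fintype V] [DecidableEq V] (G : SimpleGraph V),
        IsRegularExpander G b d → (R : ℕ∞) ≤ G.girth →
        1 - C * Real.exp (-c * Fintype.card V) ≤
          percProb G p (fun H =>
            ∀ c₁ : H.ConnectedComponent, IsLargestComp H c₁ →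
              |((twoCoreComp H c₁).support.ncard : ℝ) / Fintype.card V
                  - (1 - q - ((d : ℝ) - 1) * p * q * (1 - q))| < ε ∧
              |((twoCoreComp H c₁).edgeSet.ncard : ℝ) / Fintype.card V
                  - (1 / 2 * p * d * (1 - q) ^ 2)| < ε) := by
  have hp0 : 0 < p := lt_of_le_of_lt (by rify at hd; exact one_div_nonneg.2 (by linarith)) hp
  obtain ⟨c, hc, R, hR, hlarge⟩ := exists_one_sub_exp_le_percProb_coreDensitiesNear hd hp0 hp1
    hq0 hq1 hq (show 0 < ε / ((d + 1) * (d + 4)) by positivity) hb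
  rw [binomMean_coreWeight_one (by omega) hq, binomMean_coreWeight_two (by omega) hq,
    mul_div_cancel₀ ε (by positivity)] at hlarge
  exact ⟨c, hc, 7, by norm_num, R, hR, fun V _ _ G hG hgirth =>
    hlarge V G (by convert hG) (Nat.cast_le.1 hgirth)⟩

end Percolation

end
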